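/- For every integer k > 1 there is no proper gradient map f : ℝ² → ℝ² with Brouwer degree deg f = k; that is, the set of proper gradient homotopy classes of proper gradient maps of degree k on ℝ² is empty for k > 1. -/

import Mathlib

open Set Metric Filter

noncomputable section

/-- Euclidean space `ℝⁿ`. -/
abbrev Euc (n : ℕ) := EuclideanSpace ℝ (Fin n)

/-- A map `f : ℝⁿ → ℝⁿ` is gradient if it is the gradient of a `C¹` function `φ : ℝⁿ → ℝ`. -/
def IsGradient {n : ℕ} (f : Euc n → Euc n) : Prop :=
  ∃ φ : Euc n → ℝ, ContDiff ℝ 1 φ ∧ ∀ x, gradient φ x = f x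

/-- A map is proper if preimages of compact sets are compact (our maps are continuous anyway). -/
def IsProper {n : ℕ} (f : Euc n → Euc n) : Prop :=
  ∀ K : Set (Euc n), IsCompact K → IsCompact (f ⁻¹' K)

/-- `h : [0,1] × ℝⁿ → ℝⁿ` is a gradient homotopy: it is continuous, each `h t` is a
gradient map, and the zero set `h⁻¹(0)` (within `[0,1] × ℝⁿ`) is compact. -/
def IsGradientHomotopy {n : ℕ} (h : ℝ → Euc n → Euc n) : Prop :=
  ContinuousOn (fun p : ℝ × Euc n => h p.1 p.2) (Icc 0 1 ×ˢ univ) ∧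
  (∀ t ∈ Icc (0:ℝ) 1, IsGradient (h t)) ∧
  IsCompact {p : ℝ × Euc n | p.1 ∈ Icc (0:ℝ) 1 ∧ h p.1 p.2 = 0}

/-- Two maps are gradient homotopic if some gradient homotopy connects them. -/
def GradientHomotopic {n : ℕ} (f g : Euc n → Euc n) : Prop :=
  ∃ h : ℝ → Euc n → Euc n, IsGradientHomotopy h ∧ h 0 = f ∧ h 1 = g

/-- `h : [0,1] × ℝⁿ → ℝⁿ` is a proper gradient homotopy: it is continuous, each `h t` is a
gradient map, and `h` is proper as a map on `[0,1] × ℝⁿ`. -/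
def IsProperGradientHomotopy {n : ℕ} (h : ℝ → Euc n → Euc n) : Prop :=
  ContinuousOn (fun p : ℝ × Euc n => h p.1 p.2) (Icc 0 1 ×ˢ univ) ∧
  (∀ t ∈ Icc (0:ℝ) 1, IsGradient (h t)) ∧
  (∀ K : Set (Euc n), IsCompact K →
    IsCompact {p : ℝ × Euc n | p.1 ∈ Icc (0:ℝ) 1 ∧ h p.1 p.2 ∈ K})

/-- Two maps are proper gradient homotopic if some proper gradient homotopy connects them. -/
def ProperGradientHomotopic {n : ℕ} (f g : Euc n → Euc n) : Prop :=
  ∃ h : ℝ → Euc n → Euc n, IsProperGradientHomotopy h ∧ h 0 = f ∧ h 1 = g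
/-- A Brouwer degree theory on `ℝⁿ`: an integer-valued function `deg f Ω`, defined for
continuous maps nonvanishing on `∂Ω`, satisfying the classical axioms of normalization,
additivity and homotopy invariance, which determine it uniquely. -/
structure DegreeTheory (n : ℕ) where
  deg : (Euc n → Euc n) → Set (Euc n) → ℤ
  normalized : ∀ Ω : Set (Euc n), IsOpen Ω → Bornology.IsBounded Ω → (0 : Euc n) ∈ Ω →
    deg id Ω = 1
  additive : ∀ (f : Euc n → Euc n) (Ω Ω₁ Ω₂ : Set (Euc n)),
    IsOpen Ω → Bornology.IsBounded Ω → IsOpen Ω₁ → IsOpen Ω₂ →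
    Ω₁ ⊆ Ω → Ω₂ ⊆ Ω → Disjoint Ω₁ Ω₂ →
    ContinuousOn f (closure Ω) →
    (∀ x ∈ closure Ω \ (Ω₁ ∪ Ω₂), f x ≠ 0) →
    deg f Ω = deg f Ω₁ + deg f Ω₂
  homotopyInv : ∀ (h : ℝ → Euc n → Euc n) (Ω : Set (Euc n)),
    IsOpen Ω → Bornology.IsBounded Ω →
    ContinuousOn (fun p : ℝ × Euc n => h p.1 p.2) (Icc 0 1 ×ˢ closure Ω) →
    (∀ t ∈ Icc (0:ℝ) 1, ∀ x ∈ frontier Ω, h t x ≠ 0) →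
    deg (h 0) Ω = deg (h 1) Ω

/-- `f` has Brouwer degree `k`: `deg f` computed on any ball containing `f⁻¹(0)` equals `k`. -/
def HasDeg {n : ℕ} (D : DegreeTheory n) (f : Euc n → Euc n) (k : ℤ) : Prop :=
  ∀ R : ℝ, 0 < R → f ⁻¹' {0} ⊆ ball 0 R → D.deg f (ball 0 R) = k


lemma rise_of_deriv {g g' : ℝ → ℝ} (h : ∀ x, HasDerivAt g (g' x) x) {a b c : ℝ} (hab : a ≤ b)
    (hc : ∀ x ∈ Icc a b, c ≤ g' x) : c * (b - a) ≤ g b - g a := by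
  refine (convex_Icc a b).mul_sub_le_image_sub_of_le_deriv
    (fun x _ => (h x).continuousAt.continuousWithinAt)
    (fun x _ => (h x).differentiableAt.differentiableWithinAt) ?_ a (left_mem_Icc.2 hab) b
    (right_mem_Icc.2 hab) hab
  intro x hx
  rw [(h x).deriv]
  exact hc x (interior_subset hx)

lemma drop_of_deriv {g g' : ℝ → ℝ} (h : ∀ x, HasDerivAt g (g' x) x) {a b c : ℝ} (hab : a ≤ b)
    (hc : ∀ x ∈ Icc a b, g' x ≤ -c) : g b ≤ g a - c * (b - a) := by
  have := rise_of_deriv (g := fun x => -g x) (g' := fun x => -g' x) (fun x => (h x).neg) hab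
    (c := c) (fun x hx => by linarith [hc x hx])
  linarith

/-- Data for the core argument in logarithmic polar coordinates. -/
structure CoreData where
  Φ : ℝ → ℝ → ℝ
  A : ℝ → ℝ → ℝ
  B : ℝ → ℝ → ℝ
  N : ℕ
  δ : ℝ
  R : ℝ
  M : ℝ
  hN : 0 < N
  hδ : 0 < δ
  hδ1 : δ ≤ 1 / 2
  hδN : 2 * δ * N = 2 * Real.pi
  hA : ∀ s θ, HasDerivAt (fun s => Φ s θ) (A s θ) s
  hB : ∀ s θ, HasDerivAt (fun θ => Φ s θ) (B s θ) θ
  perΦ : ∀ s θ, Φ s (θ + 2 * Real.pi) = Φ s θ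
  perA : ∀ s θ, A s (θ + 2 * Real.pi) = A s θ
  perB : ∀ s θ, B s (θ + 2 * Real.pi) = B s θ
  nd : ∀ s θ, 0 ≤ s → 1 ≤ |A s θ| ∨ 1 ≤ |B s θ|
  ucA : ∀ s s' θ θ', 0 ≤ s → 0 ≤ s' → s ≤ R → s' ≤ R → |s - s'| ≤ 4 * δ → |θ - θ'| ≤ 4 * δ →
    |A s θ - A s' θ'| ≤ 1 / 8
  ucB : ∀ s s' θ θ', 0 ≤ s → 0 ≤ s' → s ≤ R → s' ≤ R → |s - s'| ≤ 4 * δ → |θ - θ'| ≤ 4 * δ →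
    |B s θ - B s' θ'| ≤ 1 / 8
  hM : ∀ s θ, 0 ≤ s → s ≤ 1 → -M ≤ Φ s θ
  hR : 10 ≤ R

namespace CoreData
variable (d : CoreData)

/-- Outward type of the `i`-th boundary interval. -/
def OT (i : ℤ) : Prop := 0 < d.A 0 (2 * d.δ * i) ∧ |d.B 0 (2 * d.δ * i)| < 1 / 2

def idx (θ : ℝ) : ℤ := ⌊θ / (2 * d.δ)⌋

def inZ (p : ℝ × ℝ) : Prop := p.1 < d.δ ∧ d.OT (d.idx p.2)

open Classical in
/-- Descent step chosen from the derivative at the reference point. -/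
def u (p : ℝ × ℝ) : ℝ × ℝ :=
  if 1 / 4 ≤ d.B p.1 p.2 then (0, -(d.δ / 2))
  else if d.B p.1 p.2 ≤ -(1 / 4) then (0, d.δ / 2)
  else if 0 < d.A p.1 p.2 then (-(d.δ / 2), 0) else (d.δ / 2, 0)

abbrev W := ZMod d.N → ℝ

def e (i : ℤ) : d.W := Pi.single (i : ZMod d.N) 1

open Classical in
/-- The label, with fuel. -/
def L : ℕ → ℝ × ℝ → d.W
  | 0, p => if d.inZ p then d.e (d.idx p.2) else 0
  | n + 1, p => if d.inZ p then d.e (d.idx p.2) else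
      if d.Φ p.1 p.2 < -d.M then 0 else L n (p + d.u p)

def Rg (j : ℕ) (p : ℝ × ℝ) : Prop :=
  0 ≤ p.1 ∧ (d.inZ p ∨ (d.Φ p.1 p.2 < -d.M + j * (d.δ / 16) ∧ p.1 < d.R - j * d.δ))

lemma idx_le (θ : ℝ) : 2 * d.δ * d.idx θ ≤ θ := by
  have h := Int.floor_le (θ / (2 * d.δ))
  have := d.hδ
  rw [le_div_iff₀ (by linarith)] at h
  unfold idx; linarith

lemma lt_idx (θ : ℝ) : θ < 2 * d.δ * d.idx θ + 2 * d.δ := by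
  have h := Int.lt_floor_add_one (θ / (2 * d.δ))
  have := d.hδ
  rw [div_lt_iff₀ (by linarith)] at h
  unfold idx; linarith

lemma idx_eq {θ : ℝ} {i : ℤ} (h1 : 2 * d.δ * i ≤ θ) (h2 : θ < 2 * d.δ * i + 2 * d.δ) :
    d.idx θ = i := by
  have := d.hδ
  unfold idx
  rw [Int.floor_eq_iff, le_div_iff₀ (by linarith), div_lt_iff₀ (by linarith)]
  constructor <;> linarith

lemma idx_per (θ : ℝ) : d.idx (θ + 2 * Real.pi) = d.idx θ + d.N := by
  have := d.hδ
  have h1 := d.idx_le θ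
  have h2 := d.lt_idx θ
  have h3 := d.hδN
  apply idx_eq <;> push_cast <;> linarith

lemma OT_per (i : ℤ) : d.OT (i + d.N) ↔ d.OT i := by
  have : 2 * d.δ * ((i + d.N : ℤ) : ℝ) = 2 * d.δ * i + 2 * Real.pi := by
    rw [← d.hδN]; push_cast; ring
  unfold OT
  rw [this, d.perA, d.perB]

lemma e_per (i : ℤ) : d.e (i + d.N) = d.e i := by
  unfold e; simp

lemma inZ_per (s θ : ℝ) : d.inZ (s, θ + 2 * Real.pi) ↔ d.inZ (s, θ) := by
  simp only [inZ, idx_per, OT_per]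

lemma u_per (s θ : ℝ) : d.u (s, θ + 2 * Real.pi) = d.u (s, θ) := by
  simp only [u, d.perA, d.perB]

lemma L_per (n : ℕ) (s θ : ℝ) : d.L n (s, θ + 2 * Real.pi) = d.L n (s, θ) := by
  induction n generalizing s θ with
  | zero =>
    by_cases hz : d.inZ (s, θ)
    · simp only [L, (d.inZ_per s θ).2 hz, hz, idx_per, e_per]
    · simp only [L, mt (d.inZ_per s θ).1 hz, hz, if_false]
  | succ n ih =>
    by_cases hz : d.inZ (s, θ)
    · simp only [L, (d.inZ_per s θ).2 hz, hz, idx_per, e_per, if_true]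
    · simp only [L, mt (d.inZ_per s θ).1 hz, hz, if_false, d.perΦ, u_per]
      have : ((s, θ + 2 * Real.pi) : ℝ × ℝ) + d.u (s, θ) =
        (s + (d.u (s, θ)).1, (θ + (d.u (s, θ)).2) + 2 * Real.pi) := by
        ext <;> simp; ring
      rw [this, ih]; rfl

/-- Nearby reference derivative gives a definite decrease. -/
lemma dec_u {p q : ℝ × ℝ} (hp : 0 ≤ p.1) (hq : 0 ≤ q.1) (hp' : p.1 ≤ d.R - d.δ)
    (hq' : q.1 ≤ d.R - d.δ) (h1 : |p.1 - q.1| ≤ d.δ) (h2 : |p.2 - q.2| ≤ d.δ)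
    (hn : 0 ≤ p.1 + (d.u q).1) :
    d.Φ (p + d.u q).1 (p + d.u q).2 ≤ d.Φ p.1 p.2 - d.δ / 16 := by
  obtain ⟨s, θ⟩ := p
  obtain ⟨s', θ'⟩ := q
  have hδ := d.hδ
  simp only [Prod.fst_add, Prod.snd_add] at *
  rw [abs_le] at h1 h2
  unfold u at hn ⊢
  simp only at hn ⊢
  split_ifs at hn ⊢ with c1 c2 c3
  · simp only [add_zero] at *
    have := rise_of_deriv (d.hB s) (a := θ + -(d.δ / 2)) (b := θ) (c := 1 / 8) (by linarith) (by
      intro x hx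
      have := d.ucB s s' x θ' hp hq (by linarith) (by linarith) (by rw [abs_le]; constructor <;> linarith)
        (by rw [abs_le]; constructor <;> linarith [hx.1, hx.2])
      rw [abs_le] at this; linarith [this.1])
    linarith
  · simp only [add_zero] at *
    have := drop_of_deriv (d.hB s) (a := θ) (b := θ + (d.δ / 2)) (c := 1 / 8) (by linarith) (by
      intro x hx
      have := d.ucB s s' x θ' hp hq (by linarith) (by linarith) (by rw [abs_le]; constructor <;> linarith)
        (by rw [abs_le]; constructor <;> linarith [hx.1, hx.2])
      rw [abs_le] at this; linarith [this.2])
    linarith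
  · simp only [add_zero] at *
    have h3 : 1 ≤ d.A s' θ' := by
      rcases d.nd s' θ' hq with h | h
      · rwa [abs_of_pos c3] at h
      · rw [le_abs'] at h; rcases h with h | h <;> linarith
    have := rise_of_deriv (fun s => d.hA s θ) (a := s + -(d.δ / 2)) (b := s) (c := 1 / 8) (by linarith) (by
      intro x hx
      have := d.ucA x s' θ θ' (by linarith [hx.1]) hq (by linarith [hx.2]) (by linarith) (by rw [abs_le]; constructor <;> linarith [hx.1, hx.2])
        (by rw [abs_le]; constructor <;> linarith)
      rw [abs_le] at this; linarith [this.1])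
    linarith
  · simp only [add_zero] at *
    have h3 : d.A s' θ' ≤ -1 := by
      rcases d.nd s' θ' hq with h | h
      · rw [abs_of_nonpos (by linarith)] at h; linarith
      · rw [le_abs'] at h; rcases h with h | h <;> linarith
    have := drop_of_deriv (fun s => d.hA s θ) (a := s) (b := s + (d.δ / 2)) (c := 1 / 8) (by linarith) (by
      intro x hx
      have := d.ucA x s' θ θ' (by linarith [hx.1]) hq (by linarith [hx.2]) (by linarith) (by rw [abs_le]; constructor <;> linarith [hx.1, hx.2])
        (by rw [abs_le]; constructor <;> linarith)
      rw [abs_le] at this; linarith [this.2])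
    linarith

lemma u_bound (p : ℝ × ℝ) : |(d.u p).1| ≤ d.δ / 2 ∧ |(d.u p).2| ≤ d.δ / 2 := by
  have hδ := d.hδ
  have : |d.δ| = d.δ := abs_of_pos hδ
  unfold u
  split_ifs <;> simp [abs_div, this] <;> linarith

/-- Off the zone, the step chosen close to the boundary points into the half plane. -/
lemma u_inward {p : ℝ × ℝ} (hp : 0 ≤ p.1) (hp2 : p.1 < d.δ / 2) (hz : ¬ d.inZ p) :
    0 ≤ (d.u p).1 := by
  obtain ⟨s, θ⟩ := p
  have hδ := d.hδ
  have hδ1 := d.hδ1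
  have hR := d.hR
  have i1 := d.idx_le θ
  have i2 := d.lt_idx θ
  simp only at *
  have hO : ¬ d.OT (d.idx θ) := fun h => hz ⟨by simp only; linarith, h⟩
  unfold u
  simp only
  split_ifs with c1 c2 c3
  · simp
  · simp
  · exfalso
    apply hO
    have a1 := d.ucA s 0 θ (2 * d.δ * d.idx θ) hp le_rfl (by linarith) (by linarith)
      (by rw [abs_le]; constructor <;> linarith) (by rw [abs_le]; constructor <;> linarith)
    have b1 := d.ucB s 0 θ (2 * d.δ * d.idx θ) hp le_rfl (by linarith) (by linarith)
      (by rw [abs_le]; constructor <;> linarith) (by rw [abs_le]; constructor <;> linarith)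
    rw [abs_le] at a1 b1
    have h3 : 1 ≤ d.A s θ := by
      rcases d.nd s θ hp with h | h
      · rwa [abs_of_pos c3] at h
      · rw [le_abs'] at h; rcases h with h | h <;> linarith
    refine ⟨by linarith, ?_⟩
    rw [abs_lt]; constructor <;> linarith
  · simp only; linarith

lemma not_inZ_of_low {p : ℝ × ℝ} (hp : 0 ≤ p.1) (h : d.Φ p.1 p.2 < -d.M) : ¬ d.inZ p := by
  intro hz
  have := d.hM p.1 p.2 hp (by linarith [hz.1, d.hδ1])
  linarith

lemma u_nonneg {p : ℝ × ℝ} (hp : 0 ≤ p.1) (hz : ¬ d.inZ p) : 0 ≤ p.1 + (d.u p).1 := by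
  by_cases h : p.1 < d.δ / 2
  · linarith [d.u_inward hp h hz]
  · have := abs_le.1 (d.u_bound p).1
    linarith [this.1]

/-- A decreasing step of size at most `δ/2` goes one level down. -/
lemma Rg_step {j : ℕ} {p v : ℝ × ℝ} (h : d.Rg (j + 1) p) (hz : ¬ d.inZ p)
    (h0 : 0 ≤ (p + v).1) (h1 : v.1 ≤ d.δ / 2)
    (h2 : d.Φ (p + v).1 (p + v).2 ≤ d.Φ p.1 p.2 - d.δ / 16) : d.Rg j (p + v) := by
  have hδ := d.hδ
  rcases h.2 with h' | ⟨h3, h4⟩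
  · exact absurd h' hz
  · refine ⟨h0, Or.inr ⟨?_, ?_⟩⟩
    · push_cast at h3; linarith
    · push_cast at h4; simp only [Prod.fst_add]; linarith

lemma Rg_bound {j : ℕ} {p : ℝ × ℝ} (h : d.Rg (j + 1) p) : p.1 ≤ d.R - d.δ := by
  have hδ := d.hδ
  rcases h.2 with h' | ⟨_, h4⟩
  · linarith [h'.1, d.hδ1, d.hR]
  · push_cast at h4
    have : 0 ≤ (j : ℝ) * d.δ := by positivity
    linarith

lemma Rg_u {j : ℕ} {p : ℝ × ℝ} (h : d.Rg (j + 1) p) (hz : ¬ d.inZ p) : d.Rg j (p + d.u p) := by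
  have h0 := d.u_nonneg h.1 hz
  have hδ := d.hδ
  refine d.Rg_step h hz (by simpa using h0) (abs_le.1 (d.u_bound p).1).2 ?_
  exact d.dec_u h.1 h.1 (d.Rg_bound h) (d.Rg_bound h) (by simp [hδ.le]) (by simp [hδ.le]) h0

lemma L_inZ {p : ℝ × ℝ} (h : d.inZ p) (n : ℕ) : d.L n p = d.e (d.idx p.2) := by
  cases n <;> simp [L, h]

lemma L_low {p : ℝ × ℝ} (hp : 0 ≤ p.1) (h : d.Φ p.1 p.2 < -d.M) (n : ℕ) : d.L n p = 0 := by
  have := d.not_inZ_of_low hp h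
  cases n <;> simp [L, h, this]

lemma L_stab (j : ℕ) (p : ℝ × ℝ) (h : d.Rg j p) (n : ℕ) (hn : j ≤ n) : d.L n p = d.L j p := by
  induction j generalizing p n with
  | zero =>
    rcases h.2 with h' | ⟨h', _⟩
    · rw [d.L_inZ h', d.L_inZ h']
    · rw [d.L_low h.1 (by simpa using h'), d.L_low h.1 (by simpa using h')]
  | succ j ih =>
    obtain ⟨m, rfl⟩ : ∃ m, n = m + 1 := ⟨n - 1, by omega⟩
    by_cases hz : d.inZ p
    · rw [d.L_inZ hz, d.L_inZ hz]
    · by_cases hl : d.Φ p.1 p.2 < -d.M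
      · rw [d.L_low h.1 hl, d.L_low h.1 hl]
      · simp only [L, hz, hl, if_false]
        exact ih _ (d.Rg_u h hz) m (by omega)

end CoreData

namespace CoreData
variable (d : CoreData)

def PP (lam : d.W →ₗ[ℝ] ℝ) (J j : ℕ) : Prop :=
  ∀ p q : ℝ × ℝ, d.Rg j p → d.Rg j q → |p.1 - q.1| ≤ d.δ → |p.2 - q.2| ≤ d.δ →
    lam (d.L J p) = lam (d.L J q)

lemma step_eq {lam : d.W →ₗ[ℝ] ℝ} {J j : ℕ} (hj : j + 1 ≤ J) (ih : d.PP lam J j)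
    {p v : ℝ × ℝ} (h : d.Rg (j + 1) p) (hz : ¬ d.inZ p) (h0 : 0 ≤ (p + v).1)
    (h1 : |v.1| ≤ d.δ / 2) (h2 : |v.2| ≤ d.δ / 2)
    (h3 : d.Φ (p + v).1 (p + v).2 ≤ d.Φ p.1 p.2 - d.δ / 16) :
    d.Rg j (p + v) ∧ lam (d.L J p) = lam (d.L J (p + v)) := by
  have hδ := d.hδ
  have hr := d.Rg_step h hz h0 (abs_le.1 h1).2 h3
  refine ⟨hr, ?_⟩
  by_cases hl : d.Φ p.1 p.2 < -d.M
  · rw [d.L_low h.1 hl, d.L_low h0 (by linarith)]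
  · have hu := d.Rg_u h hz
    have e1 : d.L J p = d.L J (p + d.u p) := by
      rw [d.L_stab _ _ h J hj, d.L_stab _ _ hu J (by omega)]
      simp only [L, hz, hl, if_false]
    rw [e1]
    have hb := d.u_bound p
    rw [abs_le, abs_le] at hb
    rw [abs_le] at h1 h2
    apply ih _ _ hu hr
    · simp only [Prod.fst_add]; rw [abs_le]; constructor <;> linarith [hb.1.1, hb.1.2]
    · simp only [Prod.snd_add]; rw [abs_le]; constructor <;> linarith [hb.2.1, hb.2.2]

lemma OT_A {i : ℤ} (h : d.OT i) : 1 ≤ d.A 0 (2 * d.δ * i) := by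
  rcases d.nd 0 (2 * d.δ * i) le_rfl with h' | h'
  · rwa [abs_of_pos h.1] at h'
  · linarith [h.2]

lemma A_near {i : ℤ} (h : d.OT i) {s θ : ℝ} (hs : 0 ≤ s) (hs' : s ≤ 4 * d.δ)
    (h1 : |θ - 2 * d.δ * i| ≤ 4 * d.δ) : 7 / 8 ≤ d.A s θ := by
  have hδ := d.hδ
  have := d.ucA s 0 θ (2 * d.δ * i) hs le_rfl (by linarith [d.hδ1, d.hR]) (by linarith [d.hR])
    (by rw [sub_zero, abs_of_nonneg hs]; exact hs') h1
  rw [abs_le] at this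
  linarith [d.OT_A h]

lemma B_near {c s θ : ℝ} (hs : 0 ≤ s) (hs' : s ≤ 4 * d.δ)
    (h1 : |θ - c| ≤ 4 * d.δ) : |d.B s θ - d.B 0 c| ≤ 1 / 8 := by
  have hδ := d.hδ
  exact d.ucB s 0 θ c hs le_rfl (by linarith [d.hδ1, d.hR]) (by linarith [d.hR])
    (by rw [sub_zero, abs_of_nonneg hs]; exact hs') h1

lemma two_off {lam : d.W →ₗ[ℝ] ℝ} {J j : ℕ} (hj : j + 1 ≤ J) (ih : d.PP lam J j)
    {p q : ℝ × ℝ} (hp : d.Rg (j + 1) p) (hq : d.Rg (j + 1) q) (zp : ¬ d.inZ p) (zq : ¬ d.inZ q)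
    (h1 : |p.1 - q.1| ≤ d.δ) (h2 : |p.2 - q.2| ≤ d.δ) (hpq : q.1 ≤ p.1) :
    lam (d.L J p) = lam (d.L J q) := by
  have hδ := d.hδ
  have nq := d.u_nonneg hq.1 zq
  have np : 0 ≤ p.1 + (d.u q).1 := by linarith
  have hb := d.u_bound q
  obtain ⟨r1, e1⟩ := d.step_eq hj ih hp zp (by simpa using np) hb.1 hb.2
    (d.dec_u hp.1 hq.1 (d.Rg_bound hp) (d.Rg_bound hq) h1 h2 np)
  obtain ⟨r2, e2⟩ := d.step_eq hj ih hq zq (by simpa using nq) hb.1 hb.2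
    (d.dec_u hq.1 hq.1 (d.Rg_bound hq) (d.Rg_bound hq) (by simp [hδ.le]) (by simp [hδ.le]) nq)
  rw [e1, e2]
  apply ih _ _ r1 r2 <;> simpa

structure Kills (lam : d.W →ₗ[ℝ] ℝ) (J : ℕ) : Prop where
  h1 : ∀ i, d.OT i → d.OT (i + 1) → lam (d.e i) = lam (d.e (i + 1))
  h2 : ∀ i, d.OT i → ¬ d.OT (i + 1) → d.B 0 (2 * d.δ * (i + 1 : ℤ)) < 0 →
    lam (d.e i) = lam (d.L J (0, 2 * d.δ * (i + 1 : ℤ) + 3 * d.δ / 2))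
  h3 : ∀ i, ¬ d.OT i → d.OT (i + 1) → 0 < d.B 0 (2 * d.δ * i) →
    lam (d.e (i + 1)) = lam (d.L J (0, 2 * d.δ * (i + 1 : ℤ) - 3 * d.δ / 2))

lemma idx_near {θ θ' : ℝ} (h : |θ - θ'| ≤ d.δ) :
    d.idx θ' = d.idx θ ∨ d.idx θ' = d.idx θ + 1 ∨ d.idx θ = d.idx θ' + 1 := by
  have hδ := d.hδ
  have a1 := d.idx_le θ
  have a2 := d.lt_idx θ
  have b1 := d.idx_le θ'
  have b2 := d.lt_idx θ'
  rw [abs_le] at h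
  have c1 : d.idx θ' < d.idx θ + 2 := by
    by_contra hc
    push Not at hc
    have : ((d.idx θ + 2 : ℤ) : ℝ) ≤ (d.idx θ' : ℝ) := by exact_mod_cast hc
    push_cast at this
    nlinarith
  have c2 : d.idx θ < d.idx θ' + 2 := by
    by_contra hc
    push Not at hc
    have : ((d.idx θ' + 2 : ℤ) : ℝ) ≤ (d.idx θ : ℝ) := by exact_mod_cast hc
    push_cast at this
    nlinarith
  omega

lemma B_big {i k : ℤ} (hi : d.OT i) (hk : ¬ d.OT k) (h : k = i + 1 ∨ i = k + 1) :
    1 / 2 ≤ |d.B 0 (2 * d.δ * k)| := by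
  have hδ := d.hδ
  by_contra hc
  push Not at hc
  apply hk
  have hA := d.A_near hi (s := 0) (θ := 2 * d.δ * k) le_rfl (by linarith)
    (by rcases h with rfl | rfl <;> push_cast <;> rw [abs_le] <;> constructor <;> linarith)
  exact ⟨by linarith, hc⟩

lemma one_off {lam : d.W →ₗ[ℝ] ℝ} {J j : ℕ} (hlam : d.Kills lam J) (hj : j + 1 ≤ J)
    (ih : d.PP lam J j)
    {p q : ℝ × ℝ} (hp : 0 ≤ p.1) (hq : d.Rg (j + 1) q) (zp : d.inZ p) (zq : ¬ d.inZ q)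
    (h1 : |p.1 - q.1| ≤ d.δ) (h2 : |p.2 - q.2| ≤ d.δ) :
    lam (d.L J p) = lam (d.L J q) := by
  have hδ := d.hδ
  have hδ1 := d.hδ1
  have hRp : d.Rg j p := ⟨hp, Or.inl zp⟩
  have zp1 := zp.1
  have hO := zp.2
  have hnear := d.idx_near h2
  have hLp := d.L_inZ zp J
  obtain ⟨s, θ⟩ := p
  obtain ⟨t, ω⟩ := q
  simp only at *
  have a1 := d.idx_le θ
  have a2 := d.lt_idx θ
  have b1 := d.idx_le ω
  have b2 := d.lt_idx ω
  have hq0 : 0 ≤ t := hq.1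
  rw [abs_le] at h1 h2
  have habs : |d.δ| = d.δ := abs_of_pos hδ
  by_cases ht : d.δ / 2 ≤ t
  · -- step straight down
    obtain ⟨r, e⟩ := d.step_eq (v := (-(d.δ / 2), 0)) hj ih hq zq (by simp; linarith)
      (by simp [abs_div, habs]) (by simp; linarith) (by
        have := rise_of_deriv (fun s => d.hA s ω) (a := t + -(d.δ / 2)) (b := t) (c := 7 / 8)
          (by linarith) (fun x hx => d.A_near hO (by linarith [hx.1]) (by linarith [hx.2])
            (by rw [abs_le]; constructor <;> linarith))
        simp only [Prod.mk_add_mk, add_zero]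
        linarith)
    rw [e]
    apply ih _ _ hRp r <;> simp only [Prod.mk_add_mk, add_zero] <;> rw [abs_le] <;>
      constructor <;> linarith
  · push Not at ht
    have hnO : ¬ d.OT (d.idx ω) := fun h => zq ⟨by simp only; linarith, h⟩
    rcases hnear with h | h | h
    · rw [h] at hnO; exact absurd hO hnO
    · -- `ω` lies in the next interval
      have hb := d.B_big hO hnO (Or.inl h)
      have hidx : (d.idx ω : ℝ) = d.idx θ + 1 := by exact_mod_cast h
      have hθω : θ < 2 * d.δ * d.idx ω := by rw [hidx]; linarith
      rw [le_abs] at hb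
      have hBn : ∀ x, 0 ≤ x → x ≤ d.δ → ∀ y, ω - 3 * d.δ ≤ y → y ≤ 2 * d.δ * d.idx ω + 2 * d.δ →
          |d.B x y - d.B 0 (2 * d.δ * d.idx ω)| ≤ 1 / 8 := fun x hx hx' y hy hy' =>
        d.B_near hx (by linarith) (by rw [abs_le]; constructor <;> linarith)
      rcases hb with hb | hb
      · obtain ⟨r, e⟩ := d.step_eq (v := (0, -(d.δ / 2))) hj ih hq zq (by simp; linarith)
          (by simp; linarith) (by simp [abs_div, habs]) (by
            have := rise_of_deriv (d.hB t) (a := ω + -(d.δ / 2)) (b := ω) (c := 3 / 8)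
              (by linarith) (fun x hx => by
                have := abs_le.1 (hBn t hq0 (by linarith) x (by linarith [hx.1]) (by linarith [hx.2]))
                linarith [this.1])
            simp only [Prod.mk_add_mk, add_zero]
            linarith)
        rw [e]
        apply ih _ _ hRp r <;> simp only [Prod.mk_add_mk, add_zero] <;> rw [abs_le] <;>
          constructor <;> linarith
      · obtain ⟨r, e⟩ := d.step_eq (v := (0, d.δ / 2)) hj ih hq zq (by simp; linarith)
          (by simp; linarith) (by simp [abs_div, habs]) (by
            have := drop_of_deriv (d.hB t) (a := ω) (b := ω + (d.δ / 2)) (c := 3 / 8)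
              (by linarith) (fun x hx => by
                have := abs_le.1 (hBn t hq0 (by linarith) x (by linarith [hx.1]) (by linarith [hx.2]))
                linarith [this.2])
            simp only [Prod.mk_add_mk, add_zero]
            linarith)
        rw [hLp, hlam.h2 _ hO (by rwa [← h]) (by rw [← h]; linarith), e, ← h]
        have hlow : d.Φ 0 (2 * d.δ * d.idx ω + 3 * d.δ / 2) ≤ d.Φ t ω - d.δ / 16 := by
          have i1 := rise_of_deriv (fun s => d.hA s ω) (a := 0) (b := t) (c := 0) hq0
            (fun x hx => by
              have := d.A_near hO (s := x) (θ := ω) hx.1 (by linarith [hx.2])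
                (by rw [abs_le]; constructor <;> linarith)
              linarith)
          have i2 := drop_of_deriv (d.hB 0) (a := ω) (b := 2 * d.δ * d.idx ω + 3 * d.δ / 2)
            (c := 3 / 8) (by linarith) (fun x hx => by
                have := abs_le.1 (hBn 0 le_rfl (by linarith) x (by linarith [hx.1]) (by linarith [hx.2]))
                linarith [this.2])
          nlinarith
        have rq : d.Rg j (0, 2 * d.δ * d.idx ω + 3 * d.δ / 2) := by
          rcases hq.2 with hh | ⟨h5, h6⟩
          · exact absurd hh zq
          · refine ⟨le_rfl, Or.inr ⟨?_, ?_⟩⟩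
            · push_cast at h5; simp only at h5 ⊢; linarith
            · push_cast at h6; simp only at h6 ⊢; linarith
        apply ih _ _ rq r <;> simp only [Prod.mk_add_mk, add_zero] <;> rw [abs_le] <;>
          constructor <;> linarith
    · -- `ω` lies in the previous interval
      have hb := d.B_big hO hnO (Or.inr h)
      have hidx : (d.idx θ : ℝ) = d.idx ω + 1 := by exact_mod_cast h
      have hθω : ω < 2 * d.δ * d.idx θ := by rw [hidx]; linarith
      have hidx2 : 2 * d.δ * d.idx θ = 2 * d.δ * d.idx ω + 2 * d.δ := by rw [hidx]; ring
      rw [le_abs] at hb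
      have hBn : ∀ x, 0 ≤ x → x ≤ d.δ → ∀ y, 2 * d.δ * d.idx ω ≤ y → y ≤ 2 * d.δ * d.idx ω + 4 * d.δ →
          |d.B x y - d.B 0 (2 * d.δ * d.idx ω)| ≤ 1 / 8 := fun x hx hx' y hy hy' =>
        d.B_near hx (by linarith) (by rw [abs_le]; constructor <;> linarith)
      rcases hb with hb | hb
      · obtain ⟨r, e⟩ := d.step_eq (v := (0, -(d.δ / 2))) hj ih hq zq (by simp; linarith)
          (by simp; linarith) (by simp [abs_div, habs]) (by
            have := rise_of_deriv (d.hB t) (a := ω + -(d.δ / 2)) (b := ω) (c := 3 / 8)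
              (by linarith) (fun x hx => by
                have := abs_le.1 (hBn t hq0 (by linarith) x (by linarith [hx.1]) (by linarith [hx.2]))
                linarith [this.1])
            simp only [Prod.mk_add_mk, add_zero]
            linarith)
        rw [hLp, h, hlam.h3 _ hnO (by rwa [← h]) (by linarith), e, ← h]
        have hlow : d.Φ 0 (2 * d.δ * d.idx θ - 3 * d.δ / 2) ≤ d.Φ t ω - d.δ / 16 := by
          have i1 := rise_of_deriv (fun s => d.hA s ω) (a := 0) (b := t) (c := 0) hq0
            (fun x hx => by
              have := d.A_near hO (s := x) (θ := ω) hx.1 (by linarith [hx.2])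
                (by rw [abs_le]; constructor <;> linarith)
              linarith)
          have i2 := rise_of_deriv (d.hB 0) (a := 2 * d.δ * d.idx θ - 3 * d.δ / 2) (b := ω)
            (c := 3 / 8) (by linarith) (fun x hx => by
                have := abs_le.1 (hBn 0 le_rfl (by linarith) x (by linarith [hx.1]) (by linarith [hx.2]))
                linarith [this.1])
          nlinarith
        have rq : d.Rg j (0, 2 * d.δ * d.idx θ - 3 * d.δ / 2) := by
          rcases hq.2 with hh | ⟨h5, h6⟩
          · exact absurd hh zq
          · refine ⟨le_rfl, Or.inr ⟨?_, ?_⟩⟩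
            · push_cast at h5; simp only at h5 ⊢; linarith
            · push_cast at h6; simp only at h6 ⊢; linarith
        apply ih _ _ rq r <;> simp only [Prod.mk_add_mk, add_zero] <;> rw [abs_le] <;>
          constructor <;> linarith
      · obtain ⟨r, e⟩ := d.step_eq (v := (0, d.δ / 2)) hj ih hq zq (by simp; linarith)
          (by simp; linarith) (by simp [abs_div, habs]) (by
            have := drop_of_deriv (d.hB t) (a := ω) (b := ω + (d.δ / 2)) (c := 3 / 8)
              (by linarith) (fun x hx => by
                have := abs_le.1 (hBn t hq0 (by linarith) x (by linarith [hx.1]) (by linarith [hx.2]))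
                linarith [this.2])
            simp only [Prod.mk_add_mk, add_zero]
            linarith)
        rw [e]
        apply ih _ _ hRp r <;> simp only [Prod.mk_add_mk, add_zero] <;> rw [abs_le] <;>
          constructor <;> linarith

lemma both_in {lam : d.W →ₗ[ℝ] ℝ} {J : ℕ} (hlam : d.Kills lam J) 
    {p q : ℝ × ℝ} (zp : d.inZ p) (zq : d.inZ q) (h2 : |p.2 - q.2| ≤ d.δ) :
    lam (d.L J p) = lam (d.L J q) := by
  rw [d.L_inZ zp, d.L_inZ zq]
  have hp := zp.2
  have hq := zq.2
  rcases d.idx_near h2 with h | h | h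
  · rw [h]
  · rw [h] at hq ⊢; exact hlam.h1 _ hp hq
  · rw [h] at hp ⊢; exact (hlam.h1 _ hq hp).symm

lemma PP_all {lam : d.W →ₗ[ℝ] ℝ} {J : ℕ} (hlam : d.Kills lam J) (j : ℕ) (hj : j ≤ J) :
    d.PP lam J j := by
  induction j with
  | zero =>
    intro p q hp hq h1 h2
    rcases hp.2 with zp | ⟨lp, _⟩ <;> rcases hq.2 with zq | ⟨lq, _⟩
    · exact d.both_in hlam zp zq h2
    · exfalso
      have := d.hM q.1 q.2 hq.1 (by have := abs_le.1 h1; linarith [zp.1, d.hδ1])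
      simp only [Nat.cast_zero, zero_mul, add_zero] at lq
      linarith
    · exfalso
      have := d.hM p.1 p.2 hp.1 (by have := abs_le.1 h1; linarith [zq.1, d.hδ1])
      simp only [Nat.cast_zero, zero_mul, add_zero] at lp
      linarith
    · simp only [Nat.cast_zero, zero_mul, add_zero] at lp lq
      rw [d.L_low hp.1 lp, d.L_low hq.1 lq]
  | succ j ih =>
    have ih := ih (by omega)
    intro p q hp hq h1 h2
    by_cases zp : d.inZ p <;> by_cases zq : d.inZ q
    · exact d.both_in hlam zp zq h2
    · exact d.one_off hlam hj ih hp.1 hq zp zq h1 h2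
    · rw [abs_sub_comm] at h1 h2
      exact (d.one_off hlam hj ih hq.1 hp zq zp h1 h2).symm
    · rcases le_total q.1 p.1 with h | h
      · exact d.two_off hj ih hp hq zp zq h1 h2 h
      · rw [abs_sub_comm] at h1 h2
        exact (d.two_off hj ih hq hp zq zp h1 h2 h).symm

end CoreData

lemma chain_const {δ : ℝ} (hδ : 0 < δ) (F : ℝ → ℝ) {a b : ℝ} (hab : a ≤ b)
    (h : ∀ x ∈ Icc a b, ∀ y ∈ Icc a b, |x - y| ≤ δ → F x = F y) : F a = F b := by
  obtain ⟨n, hn⟩ := exists_nat_ge ((b - a) / δ)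
  rw [div_le_iff₀ hδ] at hn
  induction n generalizing a with
  | zero =>
    have : a = b := by simp at hn; linarith
    rw [this]
  | succ n ih =>
    by_cases hc : a + δ ≤ b
    · rw [h a ⟨le_rfl, hab⟩ (a + δ) ⟨by linarith, hc⟩ (by simp [abs_of_pos hδ])]
      refine ih hc (fun x hx y hy => h x ⟨by linarith [hx.1], hx.2⟩ y ⟨by linarith [hy.1], hy.2⟩) ?_
      push_cast at hn; linarith
    · exact h a ⟨le_rfl, hab⟩ b ⟨hab, le_rfl⟩ (by rw [abs_le]; constructor <;> linarith)

lemma periodic_emod {α : Type*} {f : ℤ → α} {c : ℤ} (h : Function.Periodic f c) (i : ℤ) :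
    f (i % c) = f i := by
  rw [Int.emod_def, mul_comm]
  exact h.sub_int_mul_eq _

namespace CoreData
variable (d : CoreData)

lemma lam_e_zero {lam : d.W →ₗ[ℝ] ℝ} {J : ℕ} (hlam : d.Kills lam J) {s₀ θ₀ : ℝ} (hs : 0 ≤ s₀)
    (hlow : d.Φ s₀ θ₀ < -d.M)
    (hrect : ∀ s θ, 0 ≤ s → s ≤ s₀ → d.Φ s θ < -d.M + J * (d.δ / 16))
    (hR : s₀ < d.R - J * d.δ) (i : ℤ) (hi : d.OT i) : lam (d.e i) = 0 := by
  have hδ := d.hδ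
  have hPP := d.PP_all hlam J le_rfl
  have hRg : ∀ s θ, 0 ≤ s → s ≤ s₀ → d.Rg J (s, θ) := fun s θ h1 h2 =>
    ⟨h1, Or.inr ⟨hrect s θ h1 h2, by simp only; linarith⟩⟩
  have e1 : lam (d.L J (0, 2 * d.δ * i)) = lam (d.L J (0, θ₀)) := by
    have key : ∀ x y : ℝ, |x - y| ≤ d.δ → lam (d.L J (0, x)) = lam (d.L J (0, y)) :=
      fun x y h => hPP _ _ (hRg _ _ le_rfl hs) (hRg _ _ le_rfl hs) (by simp [hδ.le]) h
    rcases le_total (2 * d.δ * i) θ₀ with h | h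
    · exact chain_const hδ (fun x => lam (d.L J (0, x))) h (fun x _ y _ => key x y)
    · exact (chain_const hδ (fun x => lam (d.L J (0, x))) h (fun x _ y _ => key x y)).symm
  have e2 : lam (d.L J (0, θ₀)) = lam (d.L J (s₀, θ₀)) :=
    chain_const hδ (fun x => lam (d.L J (x, θ₀))) hs (fun x hx y hy h =>
      hPP _ _ (hRg _ _ hx.1 hx.2) (hRg _ _ hy.1 hy.2) h (by simp [hδ.le]))
  have hidx : d.idx (2 * d.δ * i) = i := d.idx_eq le_rfl (by linarith)
  have hz : d.inZ (0, 2 * d.δ * i) := ⟨hδ, by simpa only [hidx] using hi⟩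
  rw [d.L_inZ hz] at e1
  simp only [hidx] at e1
  rw [e1, e2, d.L_low hs hlow, map_zero]

/-- Edges carrying an equation. -/
def Q (i : ℤ) : Prop :=
  (d.OT i ∧ d.OT (i + 1)) ∨ (d.OT i ∧ ¬ d.OT (i + 1) ∧ d.B 0 (2 * d.δ * (i + 1 : ℤ)) < 0) ∨
  (¬ d.OT i ∧ d.OT (i + 1) ∧ 0 < d.B 0 (2 * d.δ * i))

open Classical in
def v (J : ℕ) (i : ℤ) : d.W :=
  if d.OT i then
    if d.OT (i + 1) then d.e i - d.e (i + 1)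
    else d.e i - d.L J (0, 2 * d.δ * (i + 1 : ℤ) + 3 * d.δ / 2)
  else d.e (i + 1) - d.L J (0, 2 * d.δ * (i + 1 : ℤ) - 3 * d.δ / 2)

lemma lat_per (i : ℤ) : 2 * d.δ * ((i + d.N : ℤ) : ℝ) = 2 * d.δ * i + 2 * Real.pi := by
  rw [← d.hδN]; push_cast; ring

lemma Q_per : Function.Periodic d.Q (d.N : ℤ) := by
  intro i
  have h1 : i + d.N + 1 = (i + 1) + d.N := by ring
  unfold Q
  rw [h1, d.lat_per (i + 1), d.lat_per i, d.perB, d.perB, d.OT_per, d.OT_per]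

lemma v_per (J : ℕ) : Function.Periodic (d.v J) (d.N : ℤ) := by
  intro i
  have h1 : i + d.N + 1 = (i + 1) + d.N := by ring
  have h2 : ∀ x y : ℝ, x + 2 * Real.pi + y = (x + y) + 2 * Real.pi := fun x y => by ring
  have h3 : ∀ x y : ℝ, x + 2 * Real.pi - y = (x - y) + 2 * Real.pi := fun x y => by ring
  have o1 := propext (d.OT_per i)
  have o2 := propext (d.OT_per (i + 1))
  rw [← h1] at o2
  unfold v
  have e2 := d.e_per (i + 1)
  rw [← h1] at e2
  have e3 := d.lat_per (i + 1)
  rw [← h1] at e3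
  rw [e2, e3, d.e_per, h2, h3, d.L_per, d.L_per]
  by_cases c1 : d.OT i <;> by_cases c2 : d.OT (i + 1) <;>
    simp only [o1, o2, c1, c2, if_true, if_false]

lemma kills_of {lam : d.W →ₗ[ℝ] ℝ} {J : ℕ} (h : ∀ i, d.Q i → lam (d.v J i) = 0) :
    d.Kills lam J := by
  refine ⟨fun i h1 h2 => ?_, fun i h1 h2 h3 => ?_, fun i h1 h2 h3 => ?_⟩
  · have := h i (Or.inl ⟨h1, h2⟩)
    simp only [v, h1, h2, if_true, map_sub] at this
    linarith
  · have := h i (Or.inr (Or.inl ⟨h1, h2, h3⟩))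
    simp only [v, h1, h2, if_true, if_false, map_sub] at this
    linarith
  · have := h i (Or.inr (Or.inr ⟨h1, h2, h3⟩))
    simp only [v, h1, if_false, map_sub] at this
    linarith

open Classical in
lemma count_le {J : ℕ} {s₀ θ₀ : ℝ} (hs : 0 ≤ s₀)
    (hlow : d.Φ s₀ θ₀ < -d.M)
    (hrect : ∀ s θ, 0 ≤ s → s ≤ s₀ → d.Φ s θ < -d.M + J * (d.δ / 16))
    (hR : s₀ < d.R - J * d.δ) :
    ((Finset.range d.N).filter (fun i : ℕ => d.OT i)).card ≤
      ((Finset.range d.N).filter (fun i : ℕ => d.Q i)).card := by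
  by_contra hc
  push Not at hc
  have : NeZero d.N := ⟨d.hN.ne'⟩
  set S : Finset d.W := ((Finset.range d.N).filter (fun i : ℕ => d.Q i)).image (fun i : ℕ => d.v J i) ∪
    ((Finset.range d.N).filter (fun i : ℕ => ¬ d.OT i)).image (fun i : ℕ => d.e i) with hS
  have hcard : S.card < d.N := by
    have h1 := Finset.card_filter_add_card_filter_not (s := Finset.range d.N) (fun i : ℕ => d.OT i)
    rw [Finset.card_range] at h1
    have h2 := Finset.card_union_le (((Finset.range d.N).filter (fun i : ℕ => d.Q i)).image (fun i : ℕ => d.v J i)) 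
      (((Finset.range d.N).filter (fun i : ℕ => ¬ d.OT i)).image (fun i : ℕ => d.e i))
    have h3 := Finset.card_image_le (s := (Finset.range d.N).filter (fun i : ℕ => d.Q i)) (f := fun i : ℕ => d.v J i)
    have h4 := Finset.card_image_le (s := (Finset.range d.N).filter (fun i : ℕ => ¬ d.OT i)) (f := fun i : ℕ => d.e i)
    rw [← hS] at h2
    omega
  have hfr : Module.finrank ℝ d.W = d.N := by
    simp [W, ZMod.card]
  have hlt : Submodule.span ℝ (S : Set d.W) < ⊤ := by
    rw [lt_top_iff_ne_top]
    intro htop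
    have := finrank_span_finset_le_card (R := ℝ) S
    rw [Set.finrank, htop, finrank_top, hfr] at this
    omega
  obtain ⟨lam, hne, hle⟩ := Submodule.exists_le_ker_of_lt_top _ hlt
  have hmem : ∀ x ∈ S, lam x = 0 := fun x hx => hle (Submodule.subset_span hx)
  have hNpos : (0 : ℤ) < d.N := by exact_mod_cast d.hN
  have hmod : ∀ i : ℤ, ∃ r ∈ Finset.range d.N, (r : ℤ) = i % d.N := fun i =>
    ⟨(i % d.N).toNat, by
      have := Int.emod_lt_of_pos i hNpos
      have h0 := Int.emod_nonneg i hNpos.ne'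
      rw [Finset.mem_range]; omega, Int.toNat_of_nonneg (Int.emod_nonneg i hNpos.ne')⟩
  have hk : d.Kills lam J := by
    apply d.kills_of
    intro i hi
    obtain ⟨r, hr, hri⟩ := hmod i
    rw [← periodic_emod (d.v_per J), ← hri]
    rw [← periodic_emod d.Q_per, ← hri] at hi
    apply hmem
    rw [hS]
    exact Finset.mem_union_left _ (Finset.mem_image.2 ⟨r, Finset.mem_filter.2 ⟨hr, hi⟩, rfl⟩)
  have hz : ∀ r ∈ Finset.range d.N, lam (d.e r) = 0 := by
    intro r hr
    by_cases ho : d.OT r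
    · exact d.lam_e_zero hk hs hlow hrect hR _ ho
    · apply hmem
      rw [hS]
      exact Finset.mem_union_right _ (Finset.mem_image.2 ⟨r, Finset.mem_filter.2 ⟨hr, ho⟩, rfl⟩)
  apply hne
  apply LinearMap.pi_ext'
  intro i
  apply LinearMap.ext_ring
  have := hz i.val (Finset.mem_range.2 (ZMod.val_lt i))
  simpa [e] using this

open Real in
open Classical in
lemma count_eq {η ρ : ℤ → ℝ} (hρ : ∀ i, 0 < ρ i)
    (hAη : ∀ i : ℤ, d.A 0 (2 * d.δ * i) = ρ i * cos (η i))
    (hBη : ∀ i : ℤ, d.B 0 (2 * d.δ * i) = ρ i * sin (η i))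
    (hη : ∀ i : ℤ, |η (i + 1) - η i| < π / 2) (w : ℤ) (hw : η d.N = η 0 + 2 * π * w) :
    (((Finset.range d.N).filter (fun i : ℕ => d.OT i)).card : ℤ) =
      ((Finset.range d.N).filter (fun i : ℕ => d.Q i)).card + w := by
  have hπ := Real.pi_pos
  set h : ℤ → ℝ := fun i => if d.OT i then (round (η i / (2 * π)) : ℝ) else ⌊η i / (2 * π)⌋ + 1 / 2
    with hh
  have sin_pos' : ∀ (x : ℝ) (n : ℤ), 2 * π * n < x → x < 2 * π * n + π → 0 < sin x := by
    intro x n h1 h2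
    rw [← Real.sin_sub_int_mul_two_pi x n]
    exact Real.sin_pos_of_pos_of_lt_pi (by linarith) (by linarith)
  have sin_neg' : ∀ (x : ℝ) (n : ℤ), 2 * π * n - π < x → x < 2 * π * n → sin x < 0 := by
    intro x n h1 h2
    rw [← Real.sin_sub_int_mul_two_pi x n]
    exact Real.sin_neg_of_neg_of_neg_pi_lt (by linarith) (by linarith)
  have cos_pos' : ∀ (x : ℝ) (n : ℤ), 2 * π * n - π / 2 < x → x < 2 * π * n + π / 2 → 0 < cos x := by
    intro x n h1 h2
    rw [← Real.cos_sub_int_mul_two_pi x n]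
    exact Real.cos_pos_of_mem_Ioo ⟨by linarith, by linarith⟩
  have hOT : ∀ i, d.OT i → ∃ n : ℤ, h i = n ∧ |η i - 2 * π * n| < π / 2 := by
    intro i hi
    refine ⟨round (η i / (2 * π)), by simp [hh, hi], ?_⟩
    have h1 := abs_sub_round (η i / (2 * π))
    set n := round (η i / (2 * π))
    have h2 : |η i - 2 * π * n| ≤ π := by
      have : η i - 2 * π * n = (2 * π) * (η i / (2 * π) - n) := by field_simp
      rw [this, abs_mul, abs_of_pos (by positivity)]
      nlinarith
    have h3 : 0 < cos (η i) := by
      have := hi.1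
      rw [hAη] at this
      exact pos_of_mul_pos_right this (hρ i).le
    by_contra hc
    push Not at hc
    have : cos |η i - 2 * π * n| ≤ 0 :=
      Real.cos_nonpos_of_pi_div_two_le_of_le hc (by linarith)
    rw [Real.cos_abs, show η i - 2 * π * n = η i - n * (2 * π) by ring,
      Real.cos_sub_int_mul_two_pi] at this
    linarith
  have hNO : ∀ i, ¬ d.OT i → ∃ m : ℤ, h i = m + 1 / 2 ∧ 2 * π * m ≤ η i ∧ η i < 2 * π * m + 2 * π := by
    intro i hi
    refine ⟨⌊η i / (2 * π)⌋, by simp [hh, hi], ?_, ?_⟩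
    · have := Int.floor_le (η i / (2 * π))
      rw [le_div_iff₀ (by positivity)] at this; linarith
    · have := Int.lt_floor_add_one (η i / (2 * π))
      rw [div_lt_iff₀ (by positivity)] at this; linarith
  have hBd : ∀ i : ℤ, |d.B 0 (2 * d.δ * i) - d.B 0 (2 * d.δ * (i + 1 : ℤ))| ≤ 1 / 8 := by
    intro i
    have hδ := d.hδ
    exact d.B_near le_rfl (by linarith) (by push_cast; rw [abs_le]; constructor <;> linarith)
  have hlevel : ∀ m n : ℤ, (2 * π * m < 2 * π * n + 2 * π) → m ≤ n := by
    intro m n h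
    have : (m : ℝ) < n + 1 := by
      by_contra hc
      push Not at hc
      nlinarith
    have : m < n + 1 := by exact_mod_cast this
    omega
  have edge : ∀ i : ℤ, ((if d.OT i then 1 else 0) + (if d.OT (i + 1) then 1 else 0)) / 2
      - (if d.Q i then 1 else 0) = h (i + 1) - h i := by
    intro i
    have hηi := abs_lt.1 (hη i)
    by_cases o1 : d.OT i <;> by_cases o2 : d.OT (i + 1)
    · obtain ⟨n, e1, b1⟩ := hOT _ o1
      obtain ⟨n', e2, b2⟩ := hOT _ o2
      rw [abs_lt] at b1 b2
      have l1 := hlevel n n' (by linarith)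
      have l2 := hlevel n' n (by linarith)
      have : n = n' := le_antisymm l1 l2
      rw [e1, e2, this]
      have hQ : d.Q i := Or.inl ⟨o1, o2⟩
      simp [o1, o2, hQ]
    · obtain ⟨n, e1, b1⟩ := hOT _ o1
      obtain ⟨m, e2, c1, c2⟩ := hNO _ o2
      rw [abs_lt] at b1
      rw [e1, e2]
      by_cases hb : d.B 0 (2 * d.δ * (i + 1 : ℤ)) < 0
      · have hQ : d.Q i := Or.inr (Or.inl ⟨o1, o2, hb⟩)
        rw [hBη] at hb
        have hs : sin (η (i + 1)) < 0 := by
          by_contra hc; push Not at hc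
          linarith [mul_nonneg (hρ (i + 1)).le hc]
        have hlt : η (i + 1) < 2 * π * n := by
          by_contra hc; push Not at hc
          rcases hc.eq_or_lt with hc | hc
          · rw [← hc, show 2 * π * n = 0 + n * (2 * π) by ring, Real.sin_add_int_mul_two_pi, Real.sin_zero] at hs
            exact lt_irrefl _ hs
          · linarith [sin_pos' _ n hc (by linarith)]
        have l1 := hlevel m (n - 1) (by push_cast; linarith)
        have l2 := hlevel (n - 1) m (by push_cast; linarith)
        have : m = n - 1 := le_antisymm l1 l2
        rw [this]
        simp [o1, o2, hQ]; ring
      · have hQ : ¬ d.Q i := by unfold Q; tauto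
        rw [hBη] at hb
        have hs : 0 ≤ sin (η (i + 1)) := by
          by_contra hc; push Not at hc
          exact hb (mul_neg_of_pos_of_neg (hρ (i + 1)) hc)
        have hlt : 2 * π * n ≤ η (i + 1) := by
          by_contra hc; push Not at hc
          linarith [sin_neg' _ n (by linarith) hc]
        have l1 := hlevel m n (by linarith)
        have l2 := hlevel n m (by linarith)
        have : m = n := le_antisymm l1 l2
        rw [this]
        simp [o1, o2, hQ]
    · obtain ⟨m, e1, c1, c2⟩ := hNO _ o1
      obtain ⟨n, e2, b1⟩ := hOT _ o2
      rw [abs_lt] at b1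
      rw [e1, e2]
      by_cases hb : 0 < d.B 0 (2 * d.δ * i)
      · have hQ : d.Q i := Or.inr (Or.inr ⟨o1, o2, hb⟩)
        rw [hBη] at hb
        have hs : 0 < sin (η i) := pos_of_mul_pos_right hb (hρ i).le
        have hlt : 2 * π * n ≤ η i := by
          by_contra hc; push Not at hc
          linarith [sin_neg' _ n (by linarith) hc]
        have l1 := hlevel m n (by linarith)
        have l2 := hlevel n m (by linarith)
        have : m = n := le_antisymm l1 l2
        rw [this]
        simp [o1, o2, hQ]; ring
      · have hQ : ¬ d.Q i := by unfold Q; tauto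
        rw [hBη] at hb
        have hs : sin (η i) ≤ 0 := by
          by_contra hc; push Not at hc
          exact hb (mul_pos (hρ i) hc)
        have hlt : η i < 2 * π * n := by
          by_contra hc; push Not at hc
          rcases hc.eq_or_lt with hc | hc
          · apply o1
            have e3 : η i = 0 + n * (2 * π) := by rw [← hc]; ring
            refine ⟨?_, ?_⟩
            · rw [hAη, e3, Real.cos_add_int_mul_two_pi, Real.cos_zero]; simpa using hρ i
            · rw [hBη, e3, Real.sin_add_int_mul_two_pi, Real.sin_zero]; norm_num
          · linarith [sin_pos' _ n hc (by linarith)]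
        have l1 := hlevel m (n - 1) (by push_cast; linarith)
        have l2 := hlevel (n - 1) m (by push_cast; linarith)
        have : m = n - 1 := le_antisymm l1 l2
        rw [this]
        simp [o1, o2, hQ]; ring
    · obtain ⟨m, e1, c1, c2⟩ := hNO _ o1
      obtain ⟨m', e2, c3, c4⟩ := hNO _ o2
      have hQ : ¬ d.Q i := by unfold Q; tauto
      have key : ∀ (a b : ℤ), ¬ d.OT a → (|d.B 0 (2 * d.δ * a) - d.B 0 (2 * d.δ * b)| ≤ 1 / 8) →
          ∀ n : ℤ, 2 * π * n - π / 2 < η a → η a < 2 * π * n → 2 * π * n ≤ η b → η b < 2 * π * n + π / 2 →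
          False := by
        intro a b ha hab n h1 h2 h3 h4
        have ca := cos_pos' _ n h1 (by linarith)
        have sa := sin_neg' _ n (by linarith) h2
        have sb : 0 ≤ sin (η b) := by
          rcases h3.eq_or_lt with hc | hc
          · rw [← hc, show 2 * π * n = 0 + n * (2 * π) by ring, Real.sin_add_int_mul_two_pi, Real.sin_zero]
          · exact (sin_pos' _ n hc (by linarith)).le
        have Ba : d.B 0 (2 * d.δ * a) < 0 := by rw [hBη]; exact mul_neg_of_pos_of_neg (hρ a) sa
        have Bb : 0 ≤ d.B 0 (2 * d.δ * b) := by rw [hBη]; exact mul_nonneg (hρ b).le sb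
        apply ha
        refine ⟨by rw [hAη]; exact mul_pos (hρ a) ca, ?_⟩
        rw [abs_le] at hab
        rw [abs_lt]; constructor <;> linarith
      have l1 : m ≤ m' := by
        by_contra hc
        push Not at hc
        have hc' : (m' : ℝ) + 1 ≤ m := by exact_mod_cast hc
        have : 2 * π * (m' + 1) ≤ 2 * π * m := mul_le_mul_of_nonneg_left hc' (by positivity)
        exact key (i + 1) i o2 (by rw [abs_sub_comm]; exact hBd i) m (by linarith) (by linarith) (by linarith) (by linarith)
      have l2 : m' ≤ m := by
        by_contra hc
        push Not at hc
        have hc' : (m : ℝ) + 1 ≤ m' := by exact_mod_cast hc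
        have : 2 * π * (m + 1) ≤ 2 * π * m' := mul_le_mul_of_nonneg_left hc' (by positivity)
        exact key i (i + 1) o1 (hBd i) m' (by linarith) (by linarith) (by linarith) (by linarith)
      have : m = m' := le_antisymm l1 l2
      rw [e1, e2, this]
      simp [o1, o2, hQ]
  have hON : d.OT d.N ↔ d.OT 0 := by
    have := d.OT_per 0
    rwa [zero_add] at this
  have hhN : h d.N = h 0 + w := by
    have e1 : η d.N / (2 * π) = η 0 / (2 * π) + w := by rw [hw]; field_simp
    simp only [hh, hON, e1, round_add_intCast, Int.floor_add_intCast]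
    split_ifs <;> push_cast <;> ring
  have tel := Finset.sum_range_sub (fun i : ℕ => h i) d.N
  have tel2 := Finset.sum_range_sub (fun i : ℕ => (if d.OT i then (1 : ℝ) else 0)) d.N
  have hsum : ∑ i ∈ Finset.range d.N, ((if d.OT (i : ℤ) then (1 : ℝ) else 0) - (if d.Q (i : ℤ) then 1 else 0)) = w := by
    have e1 : ∀ i ∈ Finset.range d.N, ((if d.OT (i : ℤ) then (1 : ℝ) else 0) - (if d.Q (i : ℤ) then 1 else 0))
      = (h ((i + 1 : ℕ) : ℤ) - h (i : ℤ)) - ((if d.OT ((i + 1 : ℕ) : ℤ) then (1 : ℝ) else 0) - (if d.OT (i : ℤ) then (1 : ℝ) else 0)) / 2 := by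
      intro i _
      have := edge i
      push_cast
      rw [← this]; ring
    rw [Finset.sum_congr rfl e1, Finset.sum_sub_distrib, tel, ← Finset.sum_div, tel2]
    simp only [hON, Nat.cast_zero]
    rw [hhN]; simp
  rw [Finset.sum_sub_distrib, Finset.sum_boole, Finset.sum_boole] at hsum
  have : (((Finset.range d.N).filter (fun i : ℕ => d.OT i)).card : ℝ) =
      ((Finset.range d.N).filter (fun i : ℕ => d.Q i)).card + w := by linarith
  exact_mod_cast this

end CoreData

lemma per_shift (F : ℝ → ℝ → ℝ) (per : ∀ s θ, F s (θ + 2 * Real.pi) = F s θ) (k : ℤ) (s θ : ℝ) :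
    F s (θ - k * (2 * Real.pi)) = F s θ := by
  have : Function.Periodic (F s) (2 * Real.pi) := per s
  exact this.sub_int_mul_eq k

lemma exists_shift (θ : ℝ) : ∃ k : ℤ, 0 ≤ θ - k * (2 * Real.pi) ∧ θ - k * (2 * Real.pi) ≤ 2 * Real.pi := by
  have hπ := Real.pi_pos
  refine ⟨⌊θ / (2 * Real.pi)⌋, ?_, ?_⟩
  · have := Int.floor_le (θ / (2 * Real.pi))
    rw [le_div_iff₀ (by positivity)] at this; linarith
  · have := Int.lt_floor_add_one (θ / (2 * Real.pi))
    rw [div_lt_iff₀ (by positivity)] at this; linarith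

lemma uc_per (F : ℝ → ℝ → ℝ) (cF : Continuous fun p : ℝ × ℝ => F p.1 p.2)
    (per : ∀ s θ, F s (θ + 2 * Real.pi) = F s θ) (R ε : ℝ) (hε : 0 < ε) :
    ∃ μ > 0, ∀ δ, δ ≤ μ → ∀ s s' θ θ', 0 ≤ s → 0 ≤ s' → s ≤ R → s' ≤ R → |s - s'| ≤ δ →
      |θ - θ'| ≤ δ → |F s θ - F s' θ'| ≤ ε := by
  have hπ := Real.pi_pos
  have hc : IsCompact (Icc 0 R ×ˢ Icc (-1) (2 * Real.pi + 1) : Set (ℝ × ℝ)) :=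
    isCompact_Icc.prod isCompact_Icc
  have hu := hc.uniformContinuousOn_of_continuous cF.continuousOn
  rw [Metric.uniformContinuousOn_iff] at hu
  obtain ⟨μ, hμ, h⟩ := hu ε hε
  refine ⟨min (μ / 2) 1, by positivity, ?_⟩
  intro δ hδ s s' θ θ' h1 h2 h3 h4 h5 h6
  obtain ⟨k, k1, k2⟩ := exists_shift θ
  rw [← per_shift F per k s θ, ← per_shift F per k s' θ']
  have hδ1 := hδ.trans (min_le_left _ _)
  have hδ2 := hδ.trans (min_le_right _ _)
  have h6' := abs_le.1 h6
  have := h (s, θ - k * (2 * Real.pi)) ⟨⟨h1, h3⟩, ⟨by simp only; linarith, by simp only; linarith⟩⟩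
    (s', θ' - k * (2 * Real.pi)) ⟨⟨h2, h4⟩, ⟨by simp only; linarith, by simp only; linarith⟩⟩ (by
      rw [Prod.dist_eq, max_lt_iff, Real.dist_eq, Real.dist_eq]
      simp only [sub_sub_sub_cancel_right]
      constructor <;> linarith)
  rw [Real.dist_eq] at this
  exact this.le

lemma bd_per (F : ℝ → ℝ → ℝ) (cF : Continuous fun p : ℝ × ℝ => F p.1 p.2)
    (per : ∀ s θ, F s (θ + 2 * Real.pi) = F s θ) (R : ℝ) :
    ∃ C, 0 ≤ C ∧ ∀ s θ, 0 ≤ s → s ≤ R → |F s θ| ≤ C := by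
  have hc : IsCompact (Icc 0 R ×ˢ Icc 0 (2 * Real.pi) : Set (ℝ × ℝ)) :=
    isCompact_Icc.prod isCompact_Icc
  obtain ⟨C, hC⟩ := hc.exists_bound_of_continuousOn cF.continuousOn
  refine ⟨max C 0, le_max_right _ _, fun s θ h1 h2 => ?_⟩
  obtain ⟨k, k1, k2⟩ := exists_shift θ
  rw [← per_shift F per k s θ]
  exact (hC (s, θ - k * (2 * Real.pi)) ⟨⟨h1, h2⟩, ⟨k1, k2⟩⟩).trans (le_max_left _ _)

open Real in
theorem core_w {Φ A B : ℝ → ℝ → ℝ} {η ρ : ℝ → ℝ}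
    (hA : ∀ s θ, HasDerivAt (fun s => Φ s θ) (A s θ) s)
    (hB : ∀ s θ, HasDerivAt (fun θ => Φ s θ) (B s θ) θ)
    (perΦ : ∀ s θ, Φ s (θ + 2 * π) = Φ s θ)
    (perA : ∀ s θ, A s (θ + 2 * π) = A s θ)
    (perB : ∀ s θ, B s (θ + 2 * π) = B s θ)
    (nd : ∀ s θ, 0 ≤ s → 1 ≤ |A s θ| ∨ 1 ≤ |B s θ|)
    (cΦ : Continuous fun p : ℝ × ℝ => Φ p.1 p.2)
    (cA : Continuous fun p : ℝ × ℝ => A p.1 p.2)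
    (cB : Continuous fun p : ℝ × ℝ => B p.1 p.2)
    (cη : Continuous η) (hρ : ∀ θ, 0 < ρ θ)
    (hAη : ∀ θ, A 0 θ = ρ θ * cos (η θ)) (hBη : ∀ θ, B 0 θ = ρ θ * sin (η θ))
    (w : ℤ) (hw : ∀ θ, η (θ + 2 * π) = η θ + 2 * π * w)
    (hunb : ∀ M, ∃ s θ, 0 ≤ s ∧ Φ s θ < -M) : w ≤ 0 := by
  have hπ := Real.pi_pos
  have hπ3 := Real.pi_gt_three
  obtain ⟨M, hM0, hM⟩ := bd_per Φ cΦ perΦ 1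
  obtain ⟨s₀, θ₀, hs₀, hlow⟩ := hunb M
  obtain ⟨C, hC0, hC⟩ := bd_per Φ cΦ perΦ s₀
  set R := s₀ + 16 * (C + M + 1) + 11 with hR
  obtain ⟨μA, hμA, ucA⟩ := uc_per A cA perA R (1 / 8) (by norm_num)
  obtain ⟨μB, hμB, ucB⟩ := uc_per B cB perB R (1 / 8) (by norm_num)
  obtain ⟨μη, hμη, ucη⟩ := uc_per (fun _ θ => η θ - w * θ) (by fun_prop)
    (fun s θ => by simp only [hw]; ring) 0 (1 / 2) (by norm_num)
  set μ := min (min (μA / 4) (μB / 4)) (min (min (μη / 2) (1 / 2)) (1 / (4 * (|(w : ℝ)| + 1)))) with hμ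
  have hμ0 : 0 < μ := by positivity
  obtain ⟨N, hN⟩ := exists_nat_gt (π / μ)
  have hN0 : (0 : ℝ) < N := lt_trans (by positivity) hN
  set δ := π / N with hδdef
  have hδ : 0 < δ := by positivity
  have hδμ : δ ≤ μ := by
    rw [div_lt_iff₀ hμ0] at hN
    rw [hδdef, div_le_iff₀ hN0]; linarith
  have m1 : δ ≤ μA / 4 := hδμ.trans ((min_le_left _ _).trans (min_le_left _ _))
  have m2 : δ ≤ μB / 4 := hδμ.trans ((min_le_left _ _).trans (min_le_right _ _))
  have m3 : δ ≤ μη / 2 := hδμ.trans ((min_le_right _ _).trans ((min_le_left _ _).trans (min_le_left _ _)))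
  have m4 : δ ≤ 1 / 2 := hδμ.trans ((min_le_right _ _).trans ((min_le_left _ _).trans (min_le_right _ _)))
  have m5 : δ ≤ 1 / (4 * (|(w : ℝ)| + 1)) := hδμ.trans ((min_le_right _ _).trans (min_le_right _ _))
  have hδN : 2 * δ * N = 2 * π := by rw [hδdef]; field_simp
  let d : CoreData :=
    { Φ := Φ, A := A, B := B, N := N, δ := δ, R := R, M := M
      hN := by exact_mod_cast hN0
      hδ := hδ, hδ1 := m4, hδN := hδN, hA := hA, hB := hB, perΦ := perΦ, perA := perA
      perB := perB, nd := nd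
      ucA := ucA (4 * δ) (by linarith), ucB := ucB (4 * δ) (by linarith)
      hM := fun s θ h1 h2 => (abs_le.1 (hM s θ h1 h2)).1
      hR := by rw [hR]; linarith }
  have hJ1 := Nat.le_ceil (16 * (C + M + 1) / δ)
  have hJ2 := Nat.ceil_lt_add_one (a := 16 * (C + M + 1) / δ) (by positivity)
  set J := ⌈16 * (C + M + 1) / δ⌉₊
  rw [div_le_iff₀ hδ] at hJ1
  have hJ2' : J * δ ≤ 16 * (C + M + 1) + δ := by
    have : (J : ℝ) * δ ≤ (16 * (C + M + 1) / δ + 1) * δ := mul_le_mul_of_nonneg_right hJ2.le hδ.le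
    rwa [add_mul, div_mul_cancel₀ _ hδ.ne', one_mul] at this
  have c1 := d.count_le (J := J) (s₀ := s₀) (θ₀ := θ₀) hs₀ hlow
    (fun s θ h1 h2 => by
      have := (abs_le.1 (hC s θ h1 h2)).2
      change Φ s θ < -M + J * (δ / 16)
      linarith)
    (by change s₀ < R - J * δ; rw [hR]; linarith)
  have c2 := d.count_eq (η := fun i => η (2 * δ * i)) (ρ := fun i => ρ (2 * δ * i))
    (fun i => hρ _) (fun i => hAη _) (fun i => hBη _) (fun i => by
      have h1 := ucη (2 * δ) (by linarith) 0 0 (2 * δ * (i + 1 : ℤ)) (2 * δ * i) le_rfl le_rfl le_rfl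
        le_rfl (by simp [hδ.le]) (by push_cast; rw [abs_le]; constructor <;> linarith)
      have h2 : |(w : ℝ)| * (2 * δ) ≤ 1 / 2 := by
        rw [le_div_iff₀ (by positivity)] at m5
        nlinarith
      have h3 : |(w : ℝ) * (2 * δ)| ≤ 1 / 2 := by rwa [abs_mul, abs_of_pos (by linarith : 0 < 2 * δ)]
      rw [abs_le] at h1 h3
      push_cast at h1 ⊢
      rw [abs_lt]
      constructor <;> linarith) w (by
      change η (2 * δ * (N : ℤ)) = η (2 * δ * (0 : ℤ)) + _
      have := hw 0
      push_cast
      rw [hδN, mul_zero, ← this, zero_add])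
  have c1' := (Nat.cast_le (α := ℤ)).2 c1
  linarith

/-- Logarithmic polar coordinates. -/
def lgp (R s θ : ℝ) : ℂ := R * Complex.exp (s + θ * Complex.I)

lemma lgp_per (R s θ : ℝ) : lgp R s (θ + 2 * Real.pi) = lgp R s θ := by
  unfold lgp
  have : (s : ℂ) + ((θ + 2 * Real.pi : ℝ) : ℂ) * Complex.I = (s + θ * Complex.I) + 2 * Real.pi * Complex.I := by
    push_cast; ring
  rw [this, Complex.exp_periodic]

lemma lgp_cont (R : ℝ) : Continuous fun p : ℝ × ℝ => lgp R p.1 p.2 := by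
  unfold lgp; fun_prop

lemma lgp_ds (R s θ : ℝ) : HasDerivAt (fun s : ℝ => lgp R s θ) (lgp R s θ) s := by
  unfold lgp
  have h1 : HasDerivAt (fun s : ℝ => (s : ℂ) + θ * Complex.I) 1 s :=
    (Complex.ofRealCLM.hasDerivAt (x := s)).add_const _
  have := (h1.cexp.const_mul (R : ℂ))
  simpa using this

lemma lgp_dθ (R s θ : ℝ) : HasDerivAt (fun θ : ℝ => lgp R s θ) (Complex.I * lgp R s θ) θ := by
  unfold lgp
  have h1 : HasDerivAt (fun θ : ℝ => (s : ℂ) + θ * Complex.I) (1 * Complex.I) θ :=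
    ((Complex.ofRealCLM.hasDerivAt (x := θ)).mul_const _).const_add _
  have := (h1.cexp.const_mul (R : ℂ))
  have e : (R : ℂ) * (Complex.exp (s + θ * Complex.I) * (1 * Complex.I)) =
    Complex.I * (R * Complex.exp (s + θ * Complex.I)) := by ring
  rw [← e]
  exact this

lemma lgp_norm {R : ℝ} (hR : 0 < R) (s θ : ℝ) : ‖lgp R s θ‖ = R * Real.exp s := by
  unfold lgp
  rw [norm_mul, Complex.norm_exp, Complex.norm_real, Real.norm_of_nonneg hR.le]
  simp

lemma lgp_surj {R : ℝ} (hR : 0 < R) (z : ℂ) (hz : R ≤ ‖z‖) : ∃ s θ, 0 ≤ s ∧ lgp R s θ = z := by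
  refine ⟨Real.log (‖z‖ / R), z.arg, Real.log_nonneg (by rwa [one_le_div hR]), ?_⟩
  unfold lgp
  have : 0 < ‖z‖ / R := div_pos (hR.trans_le hz) hR
  rw [Complex.exp_add, ← Complex.ofReal_exp, Real.exp_log this, ← mul_assoc, ← Complex.ofReal_mul,
    mul_div_cancel₀ _ hR.ne', Complex.norm_mul_exp_arg_mul_I]

lemma not_bdd {ψ : ℂ → ℝ} {g : ℂ → ℂ} 
    (hψ : ∀ z, HasFDerivAt ψ (innerSL ℝ (g z)) z) {R : ℝ} (hR1 : 1 ≤ R)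
    (hR : ∀ z, R ≤ ‖z‖ → 2 ≤ ‖g z‖) {M : ℝ} (h1 : ∀ z, R ≤ ‖z‖ → ψ z ≤ M)
    (h2 : ∀ z, R ≤ ‖z‖ → -M ≤ ψ z) : False := by
  have hM : 0 ≤ M := by
    have a := h1 R (by simp [abs_of_nonneg (zero_le_one.trans hR1)])
    have b := h2 R (by simp [abs_of_nonneg (zero_le_one.trans hR1)])
    linarith
  set r := 2 * (2 * M + 1) with hr
  have hr0 : 0 < r := by positivity
  set K := (2 * M + 1) / r ^ 2 with hK
  have hKr : K * r = 1 / 2 := by rw [hK, hr]; field_simp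
  have hKr2 : K * r ^ 2 = 2 * M + 1 := by rw [hK]; field_simp
  have hK0 : 0 < K := by positivity
  set z₀ : ℂ := ((R + r : ℝ) : ℂ)
  have hz₀ : ‖z₀‖ = R + r := by
    simp only [z₀, Complex.norm_real]; exact Real.norm_of_nonneg (by linarith)
  have hball : ∀ z ∈ closedBall z₀ r, R ≤ ‖z‖ := by
    intro z hz
    rw [mem_closedBall, dist_eq_norm] at hz
    have := norm_sub_norm_le z₀ z
    rw [norm_sub_rev] at this
    linarith
  set F : ℂ → ℝ := fun z => ψ z + K * ‖z - z₀‖ ^ 2 with hF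
  have hFd : ∀ z, HasFDerivAt F (innerSL ℝ (g z) + K • (2 • innerSL ℝ (z - z₀))) z := by
    intro z
    refine (hψ z).add ?_
    have := ((hasFDerivAt_id z).sub_const z₀).norm_sq
    exact this.const_mul K
  have hFc : Continuous F := continuous_iff_continuousAt.2 fun z => (hFd z).continuousAt
  obtain ⟨z, hz, hmin⟩ := (isCompact_closedBall z₀ r).exists_isMinOn
    ⟨z₀, mem_closedBall_self hr0.le⟩ hFc.continuousOn
  have hF0 : F z ≤ F z₀ := hmin (mem_closedBall_self hr0.le)
  have hF0' : F z₀ ≤ M := by simpa [hF] using h1 z₀ (hball _ (mem_closedBall_self hr0.le))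
  have hlt : ‖z - z₀‖ < r := by
    have hle : ‖z - z₀‖ ≤ r := by rwa [mem_closedBall, dist_eq_norm] at hz
    rcases hle.lt_or_eq with h | h
    · exact h
    · exfalso
      have : F z = ψ z + K * r ^ 2 := by simp only [hF, h]
      linarith [h2 z (hball z hz)]
  have hloc : IsLocalMin F z := by
    apply hmin.isLocalMin
    exact mem_of_superset (isOpen_ball.mem_nhds (by rwa [mem_ball, dist_eq_norm])) ball_subset_closedBall
  have h0 := hloc.hasFDerivAt_eq_zero (hFd z)
  have h3 : g z = -((2 * K) • (z - z₀)) := by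
    rw [← map_nsmul, ← map_smul, ← map_add] at h0
    have : g z + K • 2 • (z - z₀) = 0 := by
      rwa [← norm_eq_zero, ← innerSL_apply_norm (𝕜 := ℝ), norm_eq_zero]
    rw [eq_neg_iff_add_eq_zero, ← this, mul_comm, mul_smul]
    simp [two_smul, smul_add]
  have h4 := hR z (hball z hz)
  rw [h3, norm_neg, norm_smul, Real.norm_of_nonneg (by positivity)] at h4
  nlinarith

open Real ComplexConjugate in
theorem wind_le {ψ : ℂ → ℝ} {g : ℂ → ℂ} (cg : Continuous g)
    (hψ : ∀ z, HasFDerivAt ψ (innerSL ℝ (g z)) z) {R : ℝ} (hR1 : 1 ≤ R)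
    (hR : ∀ z, R ≤ ‖z‖ → 2 ≤ ‖g z‖) {κ : ℝ → ℂ} (cκ : Continuous κ)
    (hκ : ∀ θ, g (lgp R 0 θ) = lgp R 0 θ * Complex.exp (κ θ)) (w : ℤ)
    (hw : ∀ θ, κ (θ + 2 * π) = κ θ + 2 * π * Complex.I * w) : w ≤ 0 := by
  have hR0 : 0 < R := by linarith
  have cψ : Continuous ψ := continuous_iff_continuousAt.2 fun z => (hψ z).continuousAt
  set Φ : ℝ → ℝ → ℝ := fun s θ => ψ (lgp R s θ) with hΦ
  set G : ℝ → ℝ → ℂ := fun s θ => g (lgp R s θ) * conj (lgp R s θ) with hG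
  have cG : Continuous fun p : ℝ × ℝ => G p.1 p.2 := by
    have := lgp_cont R
    simp only [hG]
    exact (cg.comp this).mul (Complex.continuous_conj.comp this)
  have hA : ∀ s θ, HasDerivAt (fun s => Φ s θ) (G s θ).re s := by
    intro s θ
    have := (hψ (lgp R s θ)).comp_hasDerivAt s (lgp_ds R s θ)
    have e : (G s θ).re = innerSL ℝ (g (lgp R s θ)) (lgp R s θ) := by
      simp [hG, Complex.inner]
      try ring
    rw [e]
    exact this
  have hB : ∀ s θ, HasDerivAt (fun θ => Φ s θ) (G s θ).im θ := by
    intro s θ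
    have := (hψ (lgp R s θ)).comp_hasDerivAt θ (lgp_dθ R s θ)
    have e : (G s θ).im = innerSL ℝ (g (lgp R s θ)) (Complex.I * lgp R s θ) := by
      simp [hG, Complex.inner]
      try ring
    rw [e]
    exact this
  have perΦ : ∀ s θ, Φ s (θ + 2 * π) = Φ s θ := fun s θ => by simp only [hΦ, lgp_per]
  have perG : ∀ s θ, G s (θ + 2 * π) = G s θ := fun s θ => by simp only [hG, lgp_per]
  have nd : ∀ s θ, 0 ≤ s → 1 ≤ |(G s θ).re| ∨ 1 ≤ |(G s θ).im| := by
    intro s θ hs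
    have h1 : R ≤ ‖lgp R s θ‖ := by
      rw [lgp_norm hR0]; nlinarith [Real.one_le_exp hs]
    have h2 := hR _ h1
    have h3 : 2 ≤ ‖G s θ‖ := by
      simp only [hG, norm_mul, RCLike.norm_conj]; nlinarith
    by_contra hc
    push Not at hc
    linarith [Complex.norm_le_abs_re_add_abs_im (G s θ)]
  have hG0 : ∀ θ, G 0 θ = ((R ^ 2 : ℝ) : ℂ) * Complex.exp (κ θ) := by
    intro θ
    simp only [hG, hκ]
    have : lgp R 0 θ * conj (lgp R 0 θ) = ((R ^ 2 : ℝ) : ℂ) := by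
      rw [Complex.mul_conj, Complex.normSq_eq_norm_sq, lgp_norm hR0]; simp
    rw [← this]; ring
  have hAη : ∀ θ, (G 0 θ).re = (R ^ 2 * Real.exp (κ θ).re) * cos (κ θ).im := by
    intro θ
    rw [hG0, Complex.re_ofReal_mul, Complex.exp_re]; ring
  have hBη : ∀ θ, (G 0 θ).im = (R ^ 2 * Real.exp (κ θ).re) * sin (κ θ).im := by
    intro θ
    rw [hG0, Complex.im_ofReal_mul, Complex.exp_im]; ring
  have cη : Continuous fun θ => (κ θ).im := Complex.continuous_im.comp cκ
  have hwη : ∀ θ, (κ (θ + 2 * π)).im = (κ θ).im + 2 * π * w := by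
    intro θ; rw [hw]; simp
  have cΦ : Continuous fun p : ℝ × ℝ => Φ p.1 p.2 := cψ.comp (lgp_cont R)
  by_cases u1 : ∀ M, ∃ s θ, 0 ≤ s ∧ Φ s θ < -M
  · exact core_w (ρ := fun θ => R ^ 2 * Real.exp (κ θ).re) hA hB perΦ (fun s θ => by rw [perG]) (fun s θ => by rw [perG]) nd
      cΦ (Complex.continuous_re.comp cG) (Complex.continuous_im.comp cG) cη
      (fun θ => by positivity) hAη hBη w hwη u1
  by_cases u2 : ∀ M, ∃ s θ, 0 ≤ s ∧ -Φ s θ < -M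
  · exact core_w (ρ := fun θ => R ^ 2 * Real.exp (κ θ).re) (Φ := fun s θ => -Φ s θ)
      (η := fun θ => (κ θ).im + π)
      (A := fun s θ => -(G s θ).re) (B := fun s θ => -(G s θ).im) (fun s θ => (hA s θ).neg)
      (fun s θ => (hB s θ).neg)
      (fun s θ => by simp only [perΦ]) (fun s θ => by simp only [perG]) (fun s θ => by simp only [perG])
      (fun s θ h => by simpa only [abs_neg] using nd s θ h)
      cΦ.neg (Complex.continuous_re.comp cG).neg (Complex.continuous_im.comp cG).neg
      (cη.add_const _)
      (fun θ => by positivity) (fun θ => by rw [hAη, Real.cos_add_pi]; ring)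
      (fun θ => by rw [hBη, Real.sin_add_pi]; ring) w (fun θ => by rw [hwη]; ring) u2
  exfalso
  push Not at u1 u2
  obtain ⟨M1, h1⟩ := u1
  obtain ⟨M2, h2⟩ := u2
  refine not_bdd (M := max M1 M2) hψ hR1 hR (fun z hz => ?_) (fun z hz => ?_)
  · obtain ⟨s, θ, hs, rfl⟩ := lgp_surj hR0 z hz
    have := h2 s θ hs
    simp only [hΦ] at this
    exact le_trans (by linarith) (le_max_right _ _)
  · obtain ⟨s, θ, hs, rfl⟩ := lgp_surj hR0 z hz
    have := h1 s θ hs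
    simp only [hΦ] at this
    linarith [le_max_left M1 M2]

/-- The identification of `ℂ` with the plane. -/
abbrev ce : ℂ ≃ₗᵢ[ℝ] Euc 2 := Complex.orthonormalBasisOneI.repr

namespace DegreeTheory
variable (D : DegreeTheory 2)

/-- The degree transported to `ℂ`. -/
def cd (g : ℂ → ℂ) (Ω : Set ℂ) : ℤ := D.deg (fun x => ce (g (ce.symm x))) (ce.symm ⁻¹' Ω)

lemma ce_closure (Ω : Set ℂ) : closure (ce.symm ⁻¹' Ω) = ce.symm ⁻¹' closure Ω :=
  (ce.symm.toHomeomorph.preimage_closure Ω).symm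

lemma ce_frontier (Ω : Set ℂ) : frontier (ce.symm ⁻¹' Ω) = ce.symm ⁻¹' frontier Ω :=
  (ce.symm.toHomeomorph.preimage_frontier Ω).symm

lemma ce_bdd {Ω : Set ℂ} (h : Bornology.IsBounded Ω) : Bornology.IsBounded (ce.symm ⁻¹' Ω) :=
  ce.symm.antilipschitz.isBounded_preimage h

lemma cd_id {Ω : Set ℂ} (ho : IsOpen Ω) (hb : Bornology.IsBounded Ω) (h0 : (0 : ℂ) ∈ Ω) :
    D.cd (fun z => z) Ω = 1 := by
  unfold cd
  rw [show (fun x => ce (ce.symm x)) = id from funext fun x => ce.apply_symm_apply x]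
  exact D.normalized _ (ho.preimage ce.symm.continuous) (ce_bdd hb) (by simpa using h0)

lemma cd_add {g : ℂ → ℂ} (hg : Continuous g) {Ω Ω₁ Ω₂ : Set ℂ} (ho : IsOpen Ω)
    (hb : Bornology.IsBounded Ω) (h1 : IsOpen Ω₁) (h2 : IsOpen Ω₂) (s1 : Ω₁ ⊆ Ω) (s2 : Ω₂ ⊆ Ω)
    (hd : Disjoint Ω₁ Ω₂) (hz : ∀ z ∈ closure Ω \ (Ω₁ ∪ Ω₂), g z ≠ 0) :
    D.cd g Ω = D.cd g Ω₁ + D.cd g Ω₂ := by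
  have hc := ce.symm.continuous
  refine D.additive _ _ _ _ (ho.preimage hc) (ce_bdd hb) (h1.preimage hc) (h2.preimage hc)
    (preimage_mono s1) (preimage_mono s2) (hd.preimage _) ?_ ?_
  · exact (ce.continuous.comp (hg.comp hc)).continuousOn
  · intro x hx
    rw [ce_closure] at hx
    have := hz (ce.symm x) hx
    simpa using this

lemma cd_empty (g : ℂ → ℂ) : D.cd g ∅ = 0 := by
  have := D.additive (fun x => ce (g (ce.symm x))) ∅ ∅ ∅ isOpen_empty Bornology.isBounded_empty
    isOpen_empty isOpen_empty le_rfl le_rfl (by simp) (by simp) (by simp)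
  unfold cd
  rw [preimage_empty]
  linarith

lemma cd_exc {g : ℂ → ℂ} (hg : Continuous g) {Ω Ω₁ : Set ℂ} (ho : IsOpen Ω)
    (hb : Bornology.IsBounded Ω) (h1 : IsOpen Ω₁) (s1 : Ω₁ ⊆ Ω)
    (hz : ∀ z ∈ closure Ω, z ∉ Ω₁ → g z ≠ 0) : D.cd g Ω = D.cd g Ω₁ := by
  rw [D.cd_add hg ho hb h1 isOpen_empty s1 (empty_subset _) (disjoint_empty _) (by
    rintro z ⟨hz1, hz2⟩
    exact hz z hz1 (by simpa using hz2)), cd_empty, add_zero]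

lemma cd_hom (h : ℝ → ℂ → ℂ) (hh : Continuous fun p : ℝ × ℂ => h p.1 p.2) {Ω : Set ℂ}
    (ho : IsOpen Ω) (hb : Bornology.IsBounded Ω)
    (hz : ∀ t ∈ Icc (0 : ℝ) 1, ∀ z ∈ frontier Ω, h t z ≠ 0) {g₀ g₁ : ℂ → ℂ}
    (e0 : ∀ z, h 0 z = g₀ z) (e1 : ∀ z, h 1 z = g₁ z) :
    D.cd g₀ Ω = D.cd g₁ Ω := by
  obtain rfl : h 0 = g₀ := funext e0
  obtain rfl : h 1 = g₁ := funext e1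
  have hc := ce.symm.continuous
  refine D.homotopyInv (fun t x => ce (h t (ce.symm x))) _ (ho.preimage hc) (ce_bdd hb) ?_ ?_
  · apply Continuous.continuousOn
    exact ce.continuous.comp (hh.comp (continuous_fst.prodMk (hc.comp continuous_snd)))
  · intro t ht x hx
    rw [ce_frontier] at hx
    have := hz t ht _ hx
    simpa using this

open ComplexConjugate

lemma cd_b_radius (n : ℕ) {r r' : ℝ} (hr : 0 < r) (hr' : 0 < r') :
    D.cd (fun z => conj z ^ n) (ball 0 r) = D.cd (fun z => conj z ^ n) (ball 0 r') := by
  wlog h : r' ≤ r generalizing r r'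
  · exact (this hr' hr (le_of_not_ge h)).symm
  refine D.cd_exc (by fun_prop) isOpen_ball isBounded_ball isOpen_ball (ball_subset_ball h) ?_
  intro z _ hz h0
  have : z = 0 := by
    have := eq_zero_of_pow_eq_zero h0
    simpa using this
  exact hz (by simpa [this] using hr')

lemma cd_a (n : ℕ) {R : ℝ} (hR : 0 < R) :
    D.cd (fun z => z * conj z ^ n) (ball 0 R) = 1 - n := by
  induction n generalizing R with
  | zero =>
    simp only [pow_zero, mul_one, Nat.cast_zero, sub_zero]
    exact D.cd_id isOpen_ball isBounded_ball (by simpa using hR)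
  | succ n ih =>
    have e1 : D.cd (fun z => conj z ^ n) (ball 0 R) = D.cd (fun z => z * conj z ^ (n + 1)) (ball 0 R) := by
      refine D.cd_hom (fun t z => ((1 - t : ℝ) + t * (z * conj z)) * conj z ^ n) (by fun_prop) isOpen_ball
        isBounded_ball ?_ (by simp) (by intro z; simp; ring)
      intro t ht z hz
      rw [frontier_ball _ hR.ne', mem_sphere_zero_iff_norm] at hz
      have hz0 : z ≠ 0 := by rintro rfl; simp at hz; linarith
      refine mul_ne_zero ?_ (pow_ne_zero _ (by simpa using hz0))
      rw [Complex.mul_conj, Complex.normSq_eq_norm_sq, hz]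
      norm_cast
      rcases ht.1.eq_or_lt with h | h
      · rw [← h]; norm_num
      · have := mul_pos h (pow_pos hR 2)
        linarith [ht.2]
    have e2 : D.cd (fun z => z * conj z ^ n) (ball 0 2) = D.cd (fun z => (z - 1) * conj z ^ n) (ball 0 2) := by
      refine D.cd_hom (fun t z => (z - t) * conj z ^ n) (by fun_prop) isOpen_ball isBounded_ball ?_
        (by simp) (by simp)
      intro t ht z hz
      rw [frontier_ball _ two_ne_zero, mem_sphere_zero_iff_norm] at hz
      have hz0 : z ≠ 0 := by rintro rfl; simp at hz
      refine mul_ne_zero ?_ (pow_ne_zero _ (by simpa using hz0))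
      intro h
      rw [sub_eq_zero] at h
      rw [h, Complex.norm_real, Real.norm_of_nonneg ht.1] at hz
      linarith [ht.2]
    have e3 : D.cd (fun z => (z - 1) * conj z ^ n) (ball 0 2) =
        D.cd (fun z => (z - 1) * conj z ^ n) (ball 0 (1 / 2)) +
        D.cd (fun z => (z - 1) * conj z ^ n) (ball 1 (1 / 2)) := by
      refine D.cd_add (by fun_prop) isOpen_ball isBounded_ball isOpen_ball isOpen_ball
        (ball_subset_ball (by norm_num)) (ball_subset_ball' (by norm_num))
        (ball_disjoint_ball (by norm_num)) ?_
      rintro z ⟨_, hz⟩ h0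
      apply hz
      rcases mul_eq_zero.1 h0 with h | h
      · right
        rw [sub_eq_zero.1 h]; simp
      · left
        have : z = 0 := by simpa using eq_zero_of_pow_eq_zero h
        rw [this]; simp
    have e4 : D.cd (fun z => (z - 1) * conj z ^ n) (ball 0 (1 / 2)) =
        D.cd (fun z => - conj z ^ n) (ball 0 (1 / 2)) := by
      refine D.cd_hom (fun t z => (((1 - t : ℝ) : ℂ) * z - 1) * conj z ^ n) (by fun_prop) isOpen_ball isBounded_ball ?_
        (by simp) (by simp)
      intro t ht z hz
      rw [frontier_ball _ (by norm_num), mem_sphere_zero_iff_norm] at hz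
      have hz0 : z ≠ 0 := by rintro rfl; simp at hz
      refine mul_ne_zero ?_ (pow_ne_zero _ (by simpa using hz0))
      intro h
      rw [sub_eq_zero] at h
      have := congrArg norm h
      rw [norm_mul, hz, Complex.norm_real, Real.norm_of_nonneg (by linarith [ht.2]), norm_one] at this
      linarith [ht.1]
    have e5 : D.cd (fun z => - conj z ^ n) (ball 0 (1 / 2)) = D.cd (fun z => conj z ^ n) (ball 0 (1 / 2)) := by
      refine D.cd_hom (fun t z => Complex.exp (Real.pi * Complex.I + t * (Real.pi * Complex.I)) * conj z ^ n) (by fun_prop) isOpen_ball isBounded_ball ?_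
        (by simp) ?_
      · intro t ht z hz
        rw [frontier_ball _ (by norm_num), mem_sphere_zero_iff_norm] at hz
        have hz0 : z ≠ 0 := by rintro rfl; simp at hz
        exact mul_ne_zero (Complex.exp_ne_zero _) (pow_ne_zero _ (by simpa using hz0))
      · intro z
        simp [Complex.exp_add]
    have e6 : D.cd (fun z => (z - 1) * conj z ^ n) (ball 1 (1 / 2)) = D.cd (fun z => z - 1) (ball 1 (1 / 2)) := by
      refine D.cd_hom (fun t z => (z - 1) * conj (1 + ((1 - t : ℝ) : ℂ) * (z - 1)) ^ n) (by fun_prop) isOpen_ball isBounded_ball ?_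
        (by simp) (by simp)
      intro t ht z hz
      rw [frontier_ball _ (by norm_num), mem_sphere_iff_norm] at hz
      refine mul_ne_zero (by rw [← norm_ne_zero_iff, hz]; norm_num) (pow_ne_zero _ ?_)
      intro h
      have h' : 1 + ((1 - t : ℝ) : ℂ) * (z - 1) = 0 := (map_eq_zero _).1 h
      have := congrArg norm (eq_neg_of_add_eq_zero_right h')
      rw [norm_mul, hz, Complex.norm_real, Real.norm_of_nonneg (by linarith [ht.2]), norm_neg, norm_one] at this
      linarith [ht.1]
    have e7 : D.cd (fun z => z - 1) (ball 0 2) = D.cd (fun z => z - 1) (ball 1 (1 / 2)) := by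
      refine D.cd_exc (by fun_prop) isOpen_ball isBounded_ball isOpen_ball
        (ball_subset_ball' (by norm_num)) ?_
      intro z _ hz h
      apply hz
      rw [sub_eq_zero.1 h]; simp
    have e8 : D.cd (fun z => z) (ball 0 2) = D.cd (fun z => z - 1) (ball 0 2) := by
      refine D.cd_hom (fun t z => z - t) (by fun_prop) isOpen_ball isBounded_ball ?_
        (by simp) (by simp)
      intro t ht z hz h
      rw [frontier_ball _ two_ne_zero, mem_sphere_zero_iff_norm] at hz
      rw [sub_eq_zero] at h
      rw [h, Complex.norm_real, Real.norm_of_nonneg ht.1] at hz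
      linarith [ht.2]
    have e9 := D.cd_id (Ω := ball 0 2) isOpen_ball isBounded_ball (by simp)
    have e10 := ih (R := 2) two_pos
    have e11 := D.cd_b_radius n hR (r' := 1 / 2) (by norm_num)
    push_cast
    linarith

end DegreeTheory

open Real in
lemma exists_log_lift (u : ℝ → ℂ) (cu : Continuous u) (hu : ∀ θ, u θ ≠ 0)
    (per : ∀ θ, u (θ + 2 * π) = u θ) :
    ∃ κ : ℝ → ℂ, Continuous κ ∧ (∀ θ, Complex.exp (κ θ) = u θ) ∧
      ∃ w : ℤ, ∀ θ, κ (θ + 2 * π) = κ θ + 2 * π * Complex.I * w := by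
  rcases Complex.isCoveringMapOn_exp.existsUnique_continuousMap_lifts
    (⟨u, cu⟩ : C(ℝ, ℂ)) (a₀ := 0) (Complex.exp_log (hu 0)) (fun x => hu x) with ⟨F, ⟨h0, hF⟩, huniq⟩
  have hF' : ∀ θ, Complex.exp (F θ) = u θ := fun θ => congrFun hF θ
  refine ⟨F, F.continuous, hF', ?_⟩
  have h1 : Complex.exp (F (0 + 2 * π)) = Complex.exp (F 0) := by rw [hF', hF', per]
  obtain ⟨w, hw⟩ := Complex.exp_eq_exp_iff_exists_int.1 h1
  refine ⟨w, fun θ => ?_⟩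
  have key := huniq ⟨fun θ => F (θ + 2 * π) - w * (2 * π * Complex.I), by fun_prop⟩ ⟨by
      have h2 : F (0 + 2 * π) - w * (2 * π * Complex.I) = F 0 := by rw [hw]; ring
      exact h2.trans h0, by
      funext θ
      simp only [Function.comp_apply, ContinuousMap.coe_mk]
      rw [Complex.exp_sub, Complex.exp_int_mul_two_pi_mul_I, div_one, hF', per]⟩
  have := DFunLike.congr_fun key θ
  simp only [ContinuousMap.coe_mk] at this
  rw [← this]; ring

open Real in
lemma exists_circle_ext {R : ℝ} (hR : 0 < R) {K : ℝ → ℂ} (cK : Continuous K)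
    (per : ∀ θ, K (θ + 2 * π) = K θ) :
    ∃ k : ℂ → ℂ, Continuous k ∧ ∀ z, ‖z‖ = R → ∃ θ, lgp R 0 θ = z ∧ k z = K θ := by
  have hp : Function.Periodic K (2 * π) := per
  set L : Real.Angle → ℂ := hp.lift with hL
  have cL : Continuous L := continuous_coinduced_dom.mpr cK
  have hc : ContinuousOn (fun z : ℂ => L (z.arg : Real.Angle)) (sphere 0 R) := by
    intro z hz
    have hz0 : z ≠ 0 := by rintro rfl; simp at hz; linarith
    have := ContinuousAt.comp (f := ((↑) ∘ Complex.arg : ℂ → Real.Angle)) (g := L) (x := z)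
      cL.continuousAt (Complex.continuousAt_arg_coe_angle hz0)
    exact this.continuousWithinAt
  obtain ⟨k, hk⟩ := ContinuousMap.exists_restrict_eq (s := sphere (0 : ℂ) R) isClosed_sphere
    ⟨_, continuousOn_iff_continuous_domRestrict.mp hc⟩
  refine ⟨k, k.continuous, fun z hz => ⟨z.arg, ?_, ?_⟩⟩
  · unfold lgp
    rw [← hz]; simp
  · have := DFunLike.congr_fun hk ⟨z, by simpa using hz⟩
    exact this

open ComplexConjugate Real in
lemma DegreeTheory.cd_eq (D : DegreeTheory 2) {g : ℂ → ℂ} (cg : Continuous g) {R : ℝ} (hR : 0 < R)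
    {κ : ℝ → ℂ} (cκ : Continuous κ)
    (hκ : ∀ θ, g (lgp R 0 θ) = lgp R 0 θ * Complex.exp (κ θ)) (n : ℕ)
    (hw : ∀ θ, κ (θ + 2 * π) = κ θ + 2 * π * Complex.I * (-n : ℂ)) :
    D.cd g (ball 0 R) = 1 - n := by
  obtain ⟨k, ck, hk⟩ := exists_circle_ext hR (K := fun θ => κ θ + n * (θ * Complex.I) - n * Real.log R)
    (by fun_prop) (fun θ => by simp only [hw]; push_cast; ring)
  have hg : ∀ z, ‖z‖ = R → g z = z * conj z ^ n * Complex.exp (k z) := by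
    intro z hz
    obtain ⟨θ, rfl, h2⟩ := hk z hz
    rw [h2, hκ]
    have e1 : conj (lgp R 0 θ) = Complex.exp (Real.log R - θ * Complex.I) := by
      unfold lgp
      rw [map_mul, ← Complex.exp_conj, Complex.exp_sub, ← Complex.ofReal_exp, Real.exp_log hR]
      simp [Complex.exp_neg, div_eq_mul_inv]
    rw [e1, ← Complex.exp_nat_mul, mul_assoc, ← Complex.exp_add]
    congr 2
    ring
  have hne : ∀ z : ℂ, ‖z‖ = R → z * conj z ^ n ≠ 0 := by
    intro z hz
    have hz0 : z ≠ 0 := by rintro rfl; simp at hz; linarith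
    exact mul_ne_zero hz0 (pow_ne_zero _ (by simpa using hz0))
  have e1 : D.cd g (ball 0 R) = D.cd (fun z => z * conj z ^ n * Complex.exp (k z)) (ball 0 R) := by
    refine D.cd_hom (fun t z => ((1 - t : ℝ) : ℂ) * g z + t * (z * conj z ^ n * Complex.exp (k z)))
      (by fun_prop) isOpen_ball isBounded_ball ?_ (by simp) (by simp)
    intro t ht z hz
    rw [frontier_ball _ hR.ne', mem_sphere_zero_iff_norm] at hz
    rw [hg z hz, ← add_mul]
    push_cast
    rw [sub_add_cancel, one_mul]
    exact mul_ne_zero (hne z hz) (Complex.exp_ne_zero _)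
  have e2 : D.cd (fun z => z * conj z ^ n * Complex.exp (k z)) (ball 0 R) =
      D.cd (fun z => z * conj z ^ n) (ball 0 R) := by
    refine D.cd_hom (fun t z => z * conj z ^ n * Complex.exp (((1 - t : ℝ) : ℂ) * k z))
      (by fun_prop) isOpen_ball isBounded_ball ?_ (by simp) (by simp)
    intro t ht z hz
    rw [frontier_ball _ hR.ne', mem_sphere_zero_iff_norm] at hz
    exact mul_ne_zero (hne z hz) (Complex.exp_ne_zero _)
  rw [e1, e2, D.cd_a n hR]

/-- for `k > 1` there is no proper gradient map `f : ℝ² → ℝ²` of Brouwer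
degree `k`; the set of proper gradient homotopy classes of degree `k` is empty. -/
theorem no_proper_gradient_map_of_deg_gt_one (k : ℤ) (hk : 1 < k) (D : DegreeTheory 2) :
    ¬ ∃ f : Euc 2 → Euc 2, IsGradient f ∧ IsProper f ∧ HasDeg D f k := by
  rintro ⟨f, ⟨φ, hφ, hf⟩, hprop, hdeg⟩
  have hφd : ∀ x, HasFDerivAt φ (innerSL ℝ (f x)) x := by
    intro x
    have h1 : DifferentiableAt ℝ φ x := hφ.differentiable (by norm_num) x
    have h2 := h1.hasGradientAt
    rw [hf] at h2
    exact h2.hasFDerivAt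
  have cf : Continuous f := by
    have h1 : Continuous (fderiv ℝ φ) := hφ.continuous_fderiv (by norm_num)
    have h2 : f = fun x => (InnerProductSpace.toDual ℝ (Euc 2)).symm (fderiv ℝ φ x) := by
      funext x; rw [← hf x]; rfl
    rw [h2]
    exact (LinearIsometryEquiv.continuous _).comp h1
  -- choice of the radius
  obtain ⟨R₀, hR₀⟩ := ((hprop (closedBall 0 2) (isCompact_closedBall 0 2)).isBounded).subset_ball 0
  set R := max R₀ 1 with hRdef
  have hR1 : 1 ≤ R := le_max_right _ _
  have hR0 : 0 < R := by linarith
  have hbig : ∀ x, R ≤ ‖x‖ → 2 ≤ ‖f x‖ := by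
    intro x hx
    by_contra hc
    push Not at hc
    have : x ∈ ball (0 : Euc 2) R₀ := hR₀ (by simpa using hc.le)
    rw [mem_ball_zero_iff] at this
    linarith [le_max_left R₀ 1]
  have hD : D.deg f (ball 0 R) = k := by
    apply hdeg R hR0
    intro x hx
    by_contra hc
    rw [mem_ball_zero_iff, not_lt] at hc
    have := hbig x hc
    rw [mem_preimage, mem_singleton_iff] at hx
    rw [hx, norm_zero] at this
    linarith
  -- transport to the complex plane
  set g : ℂ → ℂ := fun z => ce.symm (f (ce z)) with hgdef
  have cg : Continuous g := ce.symm.continuous.comp (cf.comp ce.continuous)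
  have hgR : ∀ z, R ≤ ‖z‖ → 2 ≤ ‖g z‖ := by
    intro z hz
    have := hbig (ce z) (by rwa [LinearIsometryEquiv.norm_map])
    rwa [← LinearIsometryEquiv.norm_map ce.symm] at this
  have hψ : ∀ z, HasFDerivAt (fun z => φ (ce z)) (innerSL ℝ (g z)) z := by
    intro z
    have h1 := (hφd (ce z)).comp z (ce.toContinuousLinearEquiv.hasFDerivAt)
    have h2 : innerSL ℝ (g z) = (innerSL ℝ (f (ce z))).comp (ce.toContinuousLinearEquiv : ℂ →L[ℝ] Euc 2) := by
      apply ContinuousLinearMap.ext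
      intro v
      have h3 := ce.inner_map_map (g z) v
      have h4 : ce (g z) = f (ce z) := ce.apply_symm_apply _
      rw [h4] at h3
      exact h3.symm
    rw [h2]
    exact h1
  have hcd : D.cd g (ball 0 R) = k := by
    rw [← hD]
    unfold DegreeTheory.cd
    have h1 : (fun x => ce (g (ce.symm x))) = f := by
      funext x
      have h2 : ce (ce.symm x) = x := ce.apply_symm_apply x
      have h3 : ce (ce.symm (f x)) = f x := ce.apply_symm_apply _
      simp only [hgdef]
      rw [h2, h3]
    rw [h1]
    congr 1
    ext x
    rw [mem_preimage, mem_ball_zero_iff, mem_ball_zero_iff, LinearIsometryEquiv.norm_map]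
  have hl0 : ∀ θ, lgp R 0 θ ≠ 0 := by
    intro θ h
    have := lgp_norm hR0 0 θ
    rw [h, norm_zero, Real.exp_zero] at this
    linarith
  have clgp : Continuous fun θ => lgp R 0 θ :=
    (lgp_cont R).comp (continuous_const.prodMk continuous_id)
  have hg0 : ∀ θ, g (lgp R 0 θ) ≠ 0 := by
    intro θ h
    have := hgR (lgp R 0 θ) (by rw [lgp_norm hR0]; simp)
    rw [h, norm_zero] at this
    linarith
  obtain ⟨κ, cκ, hκ, w, hw⟩ := exists_log_lift (fun θ => g (lgp R 0 θ) / lgp R 0 θ)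
    ((cg.comp clgp).div clgp hl0) (fun θ => div_ne_zero (hg0 θ) (hl0 θ))
    (fun θ => by simp only [lgp_per])
  have hκ' : ∀ θ, g (lgp R 0 θ) = lgp R 0 θ * Complex.exp (κ θ) := by
    intro θ
    rw [hκ, mul_div_cancel₀ _ (hl0 θ)]
  have hw0 := wind_le cg hψ hR1 hgR cκ hκ' w hw
  obtain ⟨n, rfl⟩ : ∃ n : ℕ, w = -n := ⟨(-w).toNat, by omega⟩
  have := D.cd_eq cg hR0 cκ hκ' n (fun θ => by rw [hw]; push_cast; rfl)
  omega
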